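/- arXiv:math/0410506 — 8 statements merged into one kernel-verified Lean document; each statement's English description precedes it below -/
import Mathlib

section
/- The topologies τ and τ' on Aut(X,𝓑) are equivalent (they have exactly the same open sets). -/
/-!
Write `s(μ) = sup_F μ(TF ∆ SF)` and `A = {x | S⁻¹x ≠ T⁻¹x}`. A point of `TF ∆ SF` lies in `A`, so
`s(μ) ≤ μ(A) ≤ μ(E(S,T))`. Conversely `μ(A) ≤ 2 s(μ)`: if countably many Borel sets `U₀, U₁, …`
separate the points of `X`, then `A` is the increasing union of the sets of those `x` for which some
`Uᵢ` with `i < n` separates `S⁻¹x` from `T⁻¹x`, and a random symmetric difference of `U₀, …, Uₙ₋₁`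
separates each such pair with probability `1/2`, so that some choice of `F` attains half the measure
(`exists_half_separating`, where the averaging is carried out by induction on `n`).
Finally `{x | Sx ≠ Tx} = T⁻¹(A)`, whence `μ(E(S,T)) ≤ 2 s(μ) + 2 s(T_*μ)` (`measure_Edis_le`).
Together with the triangle inequalities for `μ(E(S,T))` and `s(μ)`, these two comparisons show that
the basic sets of each topology are open for the other.
-/

open MeasureTheory Set Filter Topology
open scoped ENNReal

namespace BDK

variable {X : Type*} [MeasurableSpace X]

/-- The set `E(S,T)` where `S` and `T` (or their inverses) disagree. -/
def Edis (S T : X ≃ᵐ X) : Set X :=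
  {x | S x ≠ T x} ∪ {x | S.symm x ≠ T.symm x}

/-- A finite family of Borel probability measures. -/
def IsProbFamily (M : Set (Measure X)) : Prop :=
  M.Finite ∧ ∀ μ ∈ M, IsProbabilityMeasure μ

/-- A finite family of non-atomic (continuous) Borel probability measures. -/
def IsContProbFamily (M : Set (Measure X)) : Prop :=
  M.Finite ∧ ∀ μ ∈ M, IsProbabilityMeasure μ ∧ ∀ x : X, μ {x} = 0

/-- A finite family of Borel sets. -/
def IsBorelFamily (F : Set (Set X)) : Prop :=
  F.Finite ∧ ∀ A ∈ F, MeasurableSet A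

/-- A finite family of uncountable Borel sets. -/
def IsUncountableBorelFamily (F : Set (Set X)) : Prop :=
  F.Finite ∧ ∀ A ∈ F, MeasurableSet A ∧ ¬ A.Countable

/-- Basic `τ`-neighborhood `U(T; μ₁,…,μₙ; ε)`. -/
def tauBall (T : X ≃ᵐ X) (M : Set (Measure X)) (ε : ℝ≥0∞) : Set (X ≃ᵐ X) :=
  {S | ∀ μ ∈ M, μ (Edis S T) < ε}

/-- The uniform topology `τ`. -/
def tau : TopologicalSpace (X ≃ᵐ X) :=
  .generateFrom {O | ∃ (T : X ≃ᵐ X) (M : Set (Measure X)) (ε : ℝ≥0∞),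
    IsProbFamily M ∧ 0 < ε ∧ O = tauBall T M ε}

/-- The topology `τ₀`: like `τ` but with non-atomic measures only. -/
def tau0 : TopologicalSpace (X ≃ᵐ X) :=
  .generateFrom {O | ∃ (T : X ≃ᵐ X) (M : Set (Measure X)) (ε : ℝ≥0∞),
    IsContProbFamily M ∧ 0 < ε ∧ O = tauBall T M ε}

/-- Basic `τ'`-neighborhood `U'(T; μ₁,…,μₙ; ε)`. -/
def tau'Ball (T : X ≃ᵐ X) (M : Set (Measure X)) (ε : ℝ≥0∞) : Set (X ≃ᵐ X) :=
  {S | ∀ μ ∈ M,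
    (⨆ F ∈ {F : Set X | MeasurableSet F}, μ (symmDiff (T '' F) (S '' F))) < ε}

/-- The topology `τ'`. -/
def tau' : TopologicalSpace (X ≃ᵐ X) :=
  .generateFrom {O | ∃ (T : X ≃ᵐ X) (M : Set (Measure X)) (ε : ℝ≥0∞),
    IsProbFamily M ∧ 0 < ε ∧ O = tau'Ball T M ε}

/-- The unit ball of bounded Borel functions. -/
def BorelUnitBall : Set (X → ℝ) := {f | Measurable f ∧ ∀ x, |f x| ≤ 1}

/-- Basic `τ''`-neighborhood `U''(T; μ₁,…,μₙ; ε)`. -/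
def tau''Ball (T : X ≃ᵐ X) (M : Set (Measure X)) (ε : ℝ) : Set (X ≃ᵐ X) :=
  {S | ∀ μ ∈ M,
    (⨆ f ∈ (BorelUnitBall : Set (X → ℝ)),
      |(∫ x, f x ∂(Measure.map (⇑S) μ)) - ∫ x, f x ∂(Measure.map (⇑T) μ)|) < ε}

/-- The topology `τ''`. -/
def tau'' : TopologicalSpace (X ≃ᵐ X) :=
  .generateFrom {O | ∃ (T : X ≃ᵐ X) (M : Set (Measure X)) (ε : ℝ),
    IsProbFamily M ∧ 0 < ε ∧ O = tau''Ball T M ε}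

/-- A finite Borel partition of `X`. -/
def IsBorelPartition (P : Finset (Set X)) : Prop :=
  (∀ A ∈ P, MeasurableSet A) ∧ (P : Set (Set X)).PairwiseDisjoint id ∧
    ⋃₀ (P : Set (Set X)) = univ

/-- Basic `τ̃`-neighborhood `Ṽ(T; μ₁,…,μₙ; ε)`. -/
def tauTildeBall (T : X ≃ᵐ X) (M : Set (Measure X)) (ε : ℝ) : Set (X ≃ᵐ X) :=
  {S | ∀ μ ∈ M,
    (⨆ P ∈ {P : Finset (Set X) | IsBorelPartition P},
      ∑ A ∈ P, |(μ (T '' A)).toReal - (μ (S '' A)).toReal|) < ε}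

/-- The topology `τ̃`. -/
def tauTilde : TopologicalSpace (X ≃ᵐ X) :=
  .generateFrom {O | ∃ (T : X ≃ᵐ X) (M : Set (Measure X)) (ε : ℝ),
    IsProbFamily M ∧ 0 < ε ∧ O = tauTildeBall T M ε}

/-- Basic `τ̄`-neighborhood `V̄(T; μ₁,…,μₙ; ε)`. -/
def tauBarBall (T : X ≃ᵐ X) (M : Set (Measure X)) (ε : ℝ) : Set (X ≃ᵐ X) :=
  {S | ∀ μ ∈ M,
    (⨆ F ∈ {F : Set X | MeasurableSet F},
      |(μ (T '' F)).toReal - (μ (S '' F)).toReal|) < ε}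

/-- The topology `τ̄`. -/
def tauBar : TopologicalSpace (X ≃ᵐ X) :=
  .generateFrom {O | ∃ (T : X ≃ᵐ X) (M : Set (Measure X)) (ε : ℝ),
    IsProbFamily M ∧ 0 < ε ∧ O = tauBarBall T M ε}

/-- Basic `p`-neighborhood `W(T; F₁,…,Fₖ)`. -/
def pBall (T : X ≃ᵐ X) (F : Set (Set X)) : Set (X ≃ᵐ X) :=
  {S | ∀ A ∈ F, S '' A = T '' A}

/-- The weak topology `p`. -/
def pTop : TopologicalSpace (X ≃ᵐ X) :=
  .generateFrom {O | ∃ (T : X ≃ᵐ X) (F : Set (Set X)), IsBorelFamily F ∧ O = pBall T F}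

/-- The topology `p₀`: like `p` but with uncountable Borel sets only. -/
def p0Top : TopologicalSpace (X ≃ᵐ X) :=
  .generateFrom {O | ∃ (T : X ≃ᵐ X) (F : Set (Set X)),
    IsUncountableBorelFamily F ∧ O = pBall T F}

/-- A finite family of bounded Borel functions. -/
def IsBddBorelFamily (G : Set (X → ℝ)) : Prop :=
  G.Finite ∧ ∀ f ∈ G, Measurable f ∧ ∃ C, ∀ x, |f x| ≤ C

/-- Basic `p̃`-neighborhood `W̃(T; f₁,…,fₘ; ε)`. -/
def pTildeBall (T : X ≃ᵐ X) (G : Set (X → ℝ)) (ε : ℝ) : Set (X ≃ᵐ X) :=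
  {S | ∀ f ∈ G, (⨆ x, |f (T.symm x) - f (S.symm x)|) < ε}

/-- The topology `p̃`. -/
def pTilde : TopologicalSpace (X ≃ᵐ X) :=
  .generateFrom {O | ∃ (T : X ≃ᵐ X) (G : Set (X → ℝ)) (ε : ℝ),
    IsBddBorelFamily G ∧ 0 < ε ∧ O = pTildeBall T G ε}

/-- Basic `p̄`-neighborhood `W̄(T; F₁,…,Fₖ; μ₁,…,μₙ; ε)`. -/
def pBarBall (T : X ≃ᵐ X) (F : Set (Set X)) (M : Set (Measure X)) (ε : ℝ≥0∞) :
    Set (X ≃ᵐ X) :=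
  {S | ∀ A ∈ F, ∀ μ ∈ M,
    μ (symmDiff (S '' A) (T '' A)) + μ (symmDiff (S.symm '' A) (T.symm '' A)) < ε}

/-- The topology `p̄`. -/
def pBar : TopologicalSpace (X ≃ᵐ X) :=
  .generateFrom {O | ∃ (T : X ≃ᵐ X) (F : Set (Set X)) (M : Set (Measure X)) (ε : ℝ≥0∞),
    IsBorelFamily F ∧ IsProbFamily M ∧ 0 < ε ∧ O = pBarBall T F M ε}

/-- `T` has period exactly `n` at `x`. -/
def PerExactAt (T : X ≃ᵐ X) (n : ℕ) (x : X) : Prop :=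
  (⇑T)^[n] x = x ∧ ∀ i, 0 < i → i < n → (⇑T)^[i] x ≠ x

/-- `Per_n(x)`: automorphisms with period exactly `n` at `x`. -/
def PerNAt (n : ℕ) (x : X) : Set (X ≃ᵐ X) := {T | PerExactAt T n x}

/-- `Per_n`: automorphisms of period exactly `n` at every point. -/
def PerN (n : ℕ) : Set (X ≃ᵐ X) := {T | ∀ x, PerExactAt T n x}

/-- `Per`: pointwise periodic automorphisms. -/
def PerSet : Set (X ≃ᵐ X) := {T | ∀ x, ∃ m, 0 < m ∧ (⇑T)^[m] x = x}

/-- `Per₀`: automorphisms with `T^N = id` for some `N ≥ 1`. -/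
def Per0Set : Set (X ≃ᵐ X) := {T | ∃ N, 0 < N ∧ ∀ x, (⇑T)^[N] x = x}

/-- `Ap`: aperiodic automorphisms. -/
def ApSet : Set (X ≃ᵐ X) := {T | ∀ x, ∀ n, 0 < n → (⇑T)^[n] x ≠ x}

/-- Automorphisms whose set of periodic points is at most countable. -/
def ApModCtbl : Set (X ≃ᵐ X) :=
  {T | {x | ∃ n, 0 < n ∧ (⇑T)^[n] x = x}.Countable}

/-- `Ctbl(X)`: automorphisms with at most countable support. -/
def Ctbl : Set (X ≃ᵐ X) := {T | {x | T x ≠ x}.Countable}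

/-- The full group `[T]`. -/
def fullGroup (T : X ≃ᵐ X) : Set (X ≃ᵐ X) :=
  {γ | ∀ x, ∃ m : ℤ, γ x = (T.toEquiv ^ m) x}

/-- Incompressible aperiodic automorphisms: aperiodic with an invariant Borel
probability measure. -/
def IncSet : Set (X ≃ᵐ X) :=
  {T | T ∈ ApSet ∧ ∃ μ : Measure X, IsProbabilityMeasure μ ∧
    ∀ A : Set X, MeasurableSet A → μ (⇑T ⁻¹' A) = μ A}

/-- The quantity `sup_F μ(TF ∆ SF)`, over Borel sets `F`, which defines the topology `τ'`. -/
noncomputable def supDist (μ : Measure X) (T S : X ≃ᵐ X) : ℝ≥0∞ :=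
  ⨆ F ∈ {F : Set X | MeasurableSet F}, μ (symmDiff (T '' F) (S '' F))

/-- The averaging argument: among the symmetric differences of a given set `F₀` with the `Uᵢ`,
`i < n`, one separates `f x` from `g x` on a set at least as large as the average, which counts
with weight `1/2` the points where some `Uᵢ` separates, and with weight `1` the other points where
`F₀` does. Keeping `F₀` general makes the induction on `n` work, by comparing `F₀` and `F₀ ∆ Uₙ`. -/
lemma exists_half_separating {Y : Type*} [MeasurableSpace Y] (μ : Measure X)
    {f g : X → Y} (hf : Measurable f) (hg : Measurable g)
    {U : ℕ → Set Y} (hU : ∀ i, MeasurableSet (U i)) (n : ℕ) :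
    ∀ F₀ : Set Y, MeasurableSet F₀ → ∃ F : Set Y, MeasurableSet F ∧
      μ (⋃ i < n, symmDiff (f ⁻¹' U i) (g ⁻¹' U i)) +
        2 * μ (symmDiff (f ⁻¹' F₀) (g ⁻¹' F₀) \ ⋃ i < n, symmDiff (f ⁻¹' U i) (g ⁻¹' U i))
        ≤ 2 * μ (symmDiff (f ⁻¹' F) (g ⁻¹' F)) := by
  have hsep : ∀ F, MeasurableSet F → MeasurableSet (symmDiff (f ⁻¹' F) (g ⁻¹' F)) :=
    fun F hF => (hf hF).symmDiff (hg hF)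
  induction n with
  | zero => intro F₀ h₀; exact ⟨F₀, h₀, by simp⟩
  | succ n ih =>
    intro F₀ h₀
    obtain ⟨F₁, hF₁, h₁⟩ := ih F₀ h₀
    obtain ⟨F₂, hF₂, h₂⟩ := ih (symmDiff F₀ (U n)) (h₀.symmDiff (hU n))
    have hD : MeasurableSet (⋃ i < n, symmDiff (f ⁻¹' U i) (g ⁻¹' U i)) :=
      MeasurableSet.iUnion fun i => MeasurableSet.iUnion fun _ => hsep _ (hU i)
    rw [biUnion_lt_succ]
    set D := ⋃ i < n, symmDiff (f ⁻¹' U i) (g ⁻¹' U i)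
    have hCW : symmDiff (f ⁻¹' symmDiff F₀ (U n)) (g ⁻¹' symmDiff F₀ (U n)) =
        symmDiff (symmDiff (f ⁻¹' F₀) (g ⁻¹' F₀)) (symmDiff (f ⁻¹' U n) (g ⁻¹' U n)) := by
      ext x; simp only [mem_symmDiff, mem_preimage]; tauto
    rw [hCW] at h₂
    have hC := hsep F₀ h₀
    have hW := hsep (U n) (hU n)
    set C := symmDiff (f ⁻¹' F₀) (g ⁻¹' F₀)
    set W := symmDiff (f ⁻¹' U n) (g ⁻¹' U n)
    have e₁ : μ (C \ D) = μ (C \ (D ∪ W)) + μ ((C ∩ W) \ D) := by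
      rw [← measure_union _ ((hC.inter hW).diff hD)]
      · congr 1; ext x; simp only [mem_union, Set.mem_sdiff, mem_inter_iff]; grind
      · rw [Set.disjoint_left]; intro x; simp only [mem_union, Set.mem_sdiff, mem_inter_iff]; tauto
    have e₂ : μ (symmDiff C W \ D) = μ (C \ (D ∪ W)) + μ ((W \ C) \ D) := by
      rw [← measure_union _ ((hW.diff hC).diff hD)]
      · congr 1; ext x; simp only [mem_union, Set.mem_sdiff, mem_symmDiff]; grind
      · rw [Set.disjoint_left]; intro x; simp only [mem_union, Set.mem_sdiff]; tauto
    have e₃ : μ (D ∪ W) ≤ μ D + (μ ((C ∩ W) \ D) + μ ((W \ C) \ D)) := by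
      refine (measure_mono ?_).trans ((measure_union_le D _).trans
        (add_le_add_right (measure_union_le _ _) _))
      intro x; simp only [mem_union, Set.mem_sdiff, mem_inter_iff]; tauto
    rw [e₁] at h₁
    rw [e₂] at h₂
    by_contra! hcon
    have l := ENNReal.add_lt_add (hcon F₁ hF₁) (hcon F₂ hF₂)
    refine absurd ((add_le_add h₁ h₂).trans_lt l) (not_lt.2 ?_)
    calc μ (D ∪ W) + 2 * μ (C \ (D ∪ W)) + (μ (D ∪ W) + 2 * μ (C \ (D ∪ W)))
        ≤ (μ D + (μ ((C ∩ W) \ D) + μ ((W \ C) \ D))) + 2 * μ (C \ (D ∪ W)) +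
          ((μ D + (μ ((C ∩ W) \ D) + μ ((W \ C) \ D))) + 2 * μ (C \ (D ∪ W))) := by gcongr
      _ = _ := by ring

lemma measure_symm_ne_le [StandardBorelSpace X] (μ : Measure X) (T S : X ≃ᵐ X) :
    μ {x | S.symm x ≠ T.symm x} ≤ 2 * supDist μ T S := by
  obtain ⟨e, he, hinj⟩ := MeasurableSpace.measurable_injection_nat_bool_of_countablySeparated X
  let U : ℕ → Set X := fun i => {x | e x i = true}
  have hU : ∀ i, MeasurableSet (U i) := fun i =>
    (measurable_pi_iff.1 he i) (measurableSet_singleton true)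
  let V : ℕ → Set X := fun i => symmDiff (T.symm ⁻¹' U i) (S.symm ⁻¹' U i)
  have hsub : {x | S.symm x ≠ T.symm x} ⊆ ⋃ n, ⋃ i < n, V i := by
    intro x hx
    have hne : e (T.symm x) ≠ e (S.symm x) := fun h => hx (hinj h).symm
    obtain ⟨i, hi⟩ := Function.ne_iff.1 hne
    refine mem_iUnion.2 ⟨i + 1, mem_iUnion₂.2 ⟨i, i.lt_succ_self, ?_⟩⟩
    simp only [V, U, mem_symmDiff, mem_preimage, mem_ofPred_eq]
    revert hi
    cases e (T.symm x) i <;> cases e (S.symm x) i <;> simp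
  have hmono : Monotone fun n => ⋃ i < n, V i := fun m n hmn =>
    biUnion_subset_biUnion_left fun i (hi : i < m) => hi.trans_le hmn
  refine (measure_mono hsub).trans ?_
  rw [hmono.measure_iUnion]
  refine iSup_le fun n => ?_
  obtain ⟨F, hF, h⟩ := exists_half_separating μ T.symm.measurable S.symm.measurable hU n ∅ .empty
  refine (le_self_add.trans h).trans ?_
  rw [← T.image_eq_preimage_symm, ← S.image_eq_preimage_symm]
  gcongr
  exact le_iSup₂ (f := fun F (_ : F ∈ {F : Set X | MeasurableSet F}) =>
    μ (symmDiff (T '' F) (S '' F))) F hF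

lemma measure_Edis_le [StandardBorelSpace X] (μ : Measure X) (T S : X ≃ᵐ X) :
    μ (Edis S T) ≤ 2 * supDist μ T S + 2 * supDist (μ.map T) T S := by
  have hpre : {x | S x ≠ T x} = T ⁻¹' {x | S.symm x ≠ T.symm x} := by
    ext x
    simp only [mem_ofPred_eq, mem_preimage, ne_eq, MeasurableEquiv.symm_apply_apply, not_iff_not]
    constructor
    · intro h; rw [← h, S.symm_apply_apply]
    · intro h; rw [← S.apply_symm_apply (T x), h]
  calc μ (Edis S T) ≤ μ {x | S x ≠ T x} + μ {x | S.symm x ≠ T.symm x} := measure_union_le _ _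
    _ = μ {x | S.symm x ≠ T.symm x} + (μ.map T) {x | S.symm x ≠ T.symm x} := by
        rw [hpre, T.map_apply, add_comm]
    _ ≤ _ := add_le_add (measure_symm_ne_le _ _ _) (measure_symm_ne_le _ _ _)

lemma supDist_le_measure_Edis (μ : Measure X) (T S : X ≃ᵐ X) :
    supDist μ T S ≤ μ (Edis S T) := by
  refine iSup₂_le fun F _ => measure_mono fun x hx => Or.inr fun h => ?_
  rw [T.image_eq_preimage_symm, S.image_eq_preimage_symm, mem_symmDiff, mem_preimage,
    mem_preimage, h] at hx
  tauto

lemma supDist_triangle (μ : Measure X) (T S R : X ≃ᵐ X) :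
    supDist μ T R ≤ supDist μ T S + supDist μ S R := by
  refine iSup₂_le fun F hF => (measure_mono (symmDiff_triangle _ (S '' F) _)).trans
    ((measure_union_le _ _).trans (add_le_add ?_ ?_))
  · exact le_iSup₂ (f := fun F (_ : F ∈ {F : Set X | MeasurableSet F}) =>
      μ (symmDiff (T '' F) (S '' F))) F hF
  · exact le_iSup₂ (f := fun F (_ : F ∈ {F : Set X | MeasurableSet F}) =>
      μ (symmDiff (S '' F) (R '' F))) F hF

lemma measure_Edis_triangle (μ : Measure X) (T S R : X ≃ᵐ X) :
    μ (Edis R T) ≤ μ (Edis S T) + μ (Edis R S) := by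
  refine (measure_mono fun x hx => ?_).trans (measure_union_le _ _)
  simp only [Edis, mem_union, mem_ofPred_eq] at hx ⊢
  by_contra! h
  obtain ⟨⟨a, b⟩, c, d⟩ := h
  exact hx.elim (· (c.trans a)) (· (d.trans b))

/-- The topologies `τ` and `τ'` are equivalent. -/
theorem tau_eq_tau' {X : Type*} [MeasurableSpace X] [StandardBorelSpace X] [Uncountable X] :
    (tau : TopologicalSpace (X ≃ᵐ X)) = tau' := by
  apply le_antisymm
  · refine le_generateFrom ?_
    rintro _ ⟨T, M, ε, ⟨hfin, hM⟩, -, rfl⟩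
    have hball : tau'Ball T M ε = ⋂ μ ∈ M, {S | supDist μ T S < ε} := by
      ext S; simp [tau'Ball, supDist]
    rw [hball]
    let _ : TopologicalSpace (X ≃ᵐ X) := tau
    refine hfin.isOpen_biInter fun μ hμ => isOpen_iff_forall_mem_open.2 fun S hS => ?_
    obtain ⟨r, hr, hrε⟩ := ENNReal.lt_iff_exists_add_pos_lt.1 hS
    have hr' : (0 : ℝ≥0∞) < r := by exact_mod_cast hr
    refine ⟨tauBall S {μ} r, fun R hR => ?_, TopologicalSpace.isOpen_generateFrom_of_mem
      ⟨S, {μ}, r, ⟨finite_singleton μ, by simpa using hM μ hμ⟩, hr', rfl⟩, ?_⟩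
    · have hR' : μ (Edis R S) < r := hR μ rfl
      calc supDist μ T R ≤ supDist μ T S + supDist μ S R := supDist_triangle _ _ _ _
        _ ≤ supDist μ T S + r := by gcongr; exact (supDist_le_measure_Edis _ _ _).trans hR'.le
        _ < ε := hrε
    · simp [tauBall, Edis, hr']
  · refine le_generateFrom ?_
    rintro _ ⟨T, M, ε, ⟨hfin, hM⟩, -, rfl⟩
    have hball : tauBall T M ε = ⋂ μ ∈ M, {S | μ (Edis S T) < ε} := by
      ext S; simp [tauBall]
    rw [hball]
    let _ : TopologicalSpace (X ≃ᵐ X) := tau'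
    refine hfin.isOpen_biInter fun μ hμ => isOpen_iff_forall_mem_open.2 fun S hS => ?_
    obtain ⟨r, hr, hrε⟩ := ENNReal.lt_iff_exists_add_pos_lt.1 hS
    have hr' : (0 : ℝ≥0∞) < r / 4 :=
      ENNReal.div_pos (by exact_mod_cast hr.ne') (by norm_num)
    have := hM μ hμ
    have hmap : IsProbabilityMeasure (μ.map S) :=
      Measure.isProbabilityMeasure_map S.measurable.aemeasurable
    refine ⟨tau'Ball S {μ, μ.map S} (r / 4), fun R hR => ?_,
      TopologicalSpace.isOpen_generateFrom_of_mem
      ⟨S, {μ, μ.map S}, r / 4, ⟨toFinite _, ?_⟩, hr', rfl⟩, ?_⟩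
    · have h₁ : supDist μ S R < r / 4 := hR μ (by simp)
      have h₂ : supDist (μ.map S) S R < r / 4 := hR (μ.map S) (by simp)
      calc μ (Edis R T) ≤ μ (Edis S T) + μ (Edis R S) := measure_Edis_triangle _ _ _ _
        _ ≤ μ (Edis S T) + (2 * supDist μ S R + 2 * supDist (μ.map S) S R) := by
            gcongr; exact measure_Edis_le _ _ _
        _ ≤ μ (Edis S T) + (2 * (r / 4) + 2 * (r / 4)) := by gcongr
        _ = μ (Edis S T) + r := by
            rw [← add_mul, show (2 + 2 : ℝ≥0∞) = 4 by norm_num,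
              ENNReal.mul_div_cancel (by norm_num) (by norm_num)]
        _ < ε := hrε
    · rintro ν (rfl | rfl) <;> assumption
    · intro ν _
      simpa using hr'

end BDK
end

section
/- The topology τ on Aut(X,𝓑) is strictly stronger than the topology τ'': every τ''-open set is τ-open, but there exists a τ-open set that is not τ''-open. -/
/-!
If `S` and `R` agree off a set of small `μ`-measure, then `R∗μ` and `S∗μ` are close in total
variation; hence every `τ''`-ball is `τ`-open.

For strictness, let `μ` be a non-atomic probability measure, which may be taken to be a Gaussian
on `ℝ` since all uncountable standard Borel spaces are isomorphic. The `τ`-open set of all `S`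
with `μ(E(S, id)) < 1` contains `id`, but is not a `τ''`-neighborhood of `id`. Indeed, given
finitely many finite measures `ν` on `ℝ`, write each as a part singular with respect to Lebesgue
measure plus `g dx` with `g ∈ L¹`. Let `N` be a Lebesgue-null set carrying all the singular parts,
and let `T` be the identity on `⋃ k ∈ ℤ, (N + ka)` and the translation `x ↦ x + a` elsewhere. Then
`T` moves Lebesgue-almost every point, fixes the singular parts, and moves `g dx` by at most
`‖g(· - a) - g‖₁` in total variation, which tends to `0` with `a` by continuity of translation
in `L¹` (`tendsto_integral_abs_translate`). The key statement is `exists_moving_equiv`; its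
consequence for `τ''` rests on `exists_ball_subset_of_isOpen`, a description of
`τ''`-neighborhoods that avoids the junk-prone nested suprema.
-/


open MeasureTheory Set Filter Topology
open scoped ENNReal

namespace BDK

variable {X : Type*} [MeasurableSpace X]

/-! ### Neighborhoods in total variation -/

/-- `R∗μ` and `S∗μ` are within `δ` when tested against the unit ball of Borel functions. -/
def TVClose (μ : Measure X) (R S : X ≃ᵐ X) (δ : ℝ) : Prop :=
  ∀ f : X → ℝ, Measurable f → (∀ x, |f x| ≤ 1) →
    |(∫ x, f (R x) ∂μ) - ∫ x, f (S x) ∂μ| ≤ δ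

lemma integrable_comp_of_bdd {μ : Measure X} [IsFiniteMeasure μ] {f : X → ℝ}
    (hf : Measurable f) (h1 : ∀ x, |f x| ≤ 1) (R : X ≃ᵐ X) :
    Integrable (fun x => f (R x)) μ :=
  Integrable.of_bound (hf.comp R.measurable).aestronglyMeasurable 1
    (Eventually.of_forall fun x => by simpa using h1 (R x))

lemma tau''_ball_eq (T : X ≃ᵐ X) (M : Set (Measure X)) (ε : ℝ) :
    tau''Ball T M ε = {S | ∀ μ ∈ M, (⨆ f ∈ (BorelUnitBall : Set (X → ℝ)),
      |(∫ x, f (S x) ∂μ) - ∫ x, f (T x) ∂μ|) < ε} := by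
  simp only [tau''Ball, integral_map_equiv]

lemma abs_integral_comp_le {μ : Measure X} [IsProbabilityMeasure μ] {f : X → ℝ}
    (h1 : ∀ x, |f x| ≤ 1) (R : X ≃ᵐ X) : |∫ x, f (R x) ∂μ| ≤ 1 := by
  have := norm_integral_le_of_norm_le_const (μ := μ) (f := fun x => f (R x)) (C := 1)
    (Eventually.of_forall fun x => by simpa using h1 (R x))
  simpa using this

/-- The supremum defining `τ''` is bounded above, so it dominates each of its terms. -/
lemma le_biSup_borelUnitBall {μ : Measure X} [IsProbabilityMeasure μ] (S T : X ≃ᵐ X)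
    {f : X → ℝ} (hf : f ∈ (BorelUnitBall : Set (X → ℝ))) :
    |(∫ x, f (S x) ∂μ) - ∫ x, f (T x) ∂μ| ≤ ⨆ f ∈ (BorelUnitBall : Set (X → ℝ)),
      |(∫ x, f (S x) ∂μ) - ∫ x, f (T x) ∂μ| := by
  have hb : BddAbove (range fun f : X → ℝ => ⨆ (_ : f ∈ (BorelUnitBall : Set (X → ℝ))),
      |(∫ x, f (S x) ∂μ) - ∫ x, f (T x) ∂μ|) := by
    refine ⟨2, ?_⟩
    rintro _ ⟨g, rfl⟩
    refine Real.iSup_le (fun hg => ?_) (by norm_num)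
    have h1 := abs_integral_comp_le (μ := μ) hg.2 S
    have h2 := abs_integral_comp_le (μ := μ) hg.2 T
    have := abs_sub (∫ x, g (S x) ∂μ) (∫ x, g (T x) ∂μ)
    linarith
  refine le_trans ?_ (le_ciSup hb f)
  rw [ciSup_pos hf]

lemma exists_mem_tau''Ball {T S : X ≃ᵐ X} {M : Set (Measure X)} {ε : ℝ}
    (hM : IsProbFamily M) (hS : S ∈ tau''Ball T M ε) :
    ∃ δ > 0, ∀ R, (∀ μ ∈ M, TVClose μ R S δ) → R ∈ tau''Ball T M ε := by
  rw [tau''_ball_eq] at hS ⊢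
  have key : ∀ᶠ δ : ℝ in 𝓝[>] 0, ∀ μ ∈ M, (⨆ f ∈ (BorelUnitBall : Set (X → ℝ)),
      |(∫ x, f (S x) ∂μ) - ∫ x, f (T x) ∂μ|) + δ < ε := by
    rw [hM.1.eventually_all]
    intro μ hμ
    have h := hS μ hμ
    filter_upwards [Ioo_mem_nhdsGT (sub_pos.2 h)] with δ hδ
    linarith [hδ.2]
  obtain ⟨δ, hδ, hpos⟩ := (key.and self_mem_nhdsWithin).exists
  refine ⟨δ, hpos, fun R hR μ hμ => lt_of_le_of_lt ?_ (hδ μ hμ)⟩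
  have hpos : 0 < δ := hpos
  have := hM.2 μ hμ
  have h0 : 0 ≤ ⨆ f ∈ (BorelUnitBall : Set (X → ℝ)),
      |(∫ x, f (S x) ∂μ) - ∫ x, f (T x) ∂μ| :=
    Real.iSup_nonneg fun f => Real.iSup_nonneg fun _ => abs_nonneg _
  refine Real.iSup_le (fun f => Real.iSup_le (fun hf => ?_) (by linarith)) (by linarith)
  have h1 := le_biSup_borelUnitBall (μ := μ) S T hf
  have h2 := hR μ hμ f hf.1 hf.2
  have h3 := abs_sub_le (∫ x, f (R x) ∂μ) (∫ x, f (S x) ∂μ) (∫ x, f (T x) ∂μ)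
  linarith

/-- Every `τ''`-open set contains, around each of its points, a total-variation ball for a finite
family of measures. The subbasic balls may be centered elsewhere; `exists_mem_tau''Ball` recenters
them. -/
lemma exists_ball_subset_of_isOpen {O : Set (X ≃ᵐ X)} (hO : IsOpen[tau''] O)
    {S : X ≃ᵐ X} (hS : S ∈ O) :
    ∃ (M : Set (Measure X)) (δ : ℝ), IsProbFamily M ∧ 0 < δ ∧
      ∀ R, (∀ μ ∈ M, TVClose μ R S δ) → R ∈ O := by
  induction hO with
  | basic O h =>
    obtain ⟨T, M, ε, hM, -, rfl⟩ := h
    obtain ⟨δ, hδ, h⟩ := exists_mem_tau''Ball hM hS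
    exact ⟨M, δ, hM, hδ, h⟩
  | univ => exact ⟨∅, 1, ⟨finite_empty, by simp⟩, one_pos, fun _ _ => mem_univ _⟩
  | inter O₁ O₂ _ _ ih₁ ih₂ =>
    obtain ⟨M₁, δ₁, hM₁, hδ₁, h₁⟩ := ih₁ hS.1
    obtain ⟨M₂, δ₂, hM₂, hδ₂, h₂⟩ := ih₂ hS.2
    refine ⟨M₁ ∪ M₂, min δ₁ δ₂, ⟨hM₁.1.union hM₂.1, ?_⟩, lt_min hδ₁ hδ₂, fun R hR => ⟨?_, ?_⟩⟩
    · rintro μ (h | h)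
      exacts [hM₁.2 μ h, hM₂.2 μ h]
    · exact h₁ R fun μ hμ f hf hf1 => (hR μ (Or.inl hμ) f hf hf1).trans (min_le_left _ _)
    · exact h₂ R fun μ hμ f hf hf1 => (hR μ (Or.inr hμ) f hf hf1).trans (min_le_right _ _)
  | sUnion 𝒪 _ ih =>
    obtain ⟨O, hO, hSO⟩ := hS
    obtain ⟨M, δ, hM, hδ, h⟩ := ih O hO hSO
    exact ⟨M, δ, hM, hδ, fun R hR => ⟨O, hO, h R hR⟩⟩

/-! ### The uniform topology is finer -/

lemma tvClose_of_measure_edis_le {μ : Measure X} [IsProbabilityMeasure μ] {R S : X ≃ᵐ X}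
    {δ : ℝ} (hδ : 0 ≤ δ) (h : μ (Edis R S) ≤ ENNReal.ofReal δ) : TVClose μ R S (2 * δ) := by
  intro f hf h1
  -- `Edis R S` need not be measurable when the diagonal is not, hence the measurable hull.
  set D := toMeasurable μ (Edis R S) with hD
  have hDm : MeasurableSet D := measurableSet_toMeasurable _ _
  have hμD : μ.real D ≤ δ := by
    rw [Measure.real, hD, measure_toMeasurable]
    exact ENNReal.toReal_le_of_le_ofReal hδ h
  rw [← integral_sub (integrable_comp_of_bdd hf h1 R) (integrable_comp_of_bdd hf h1 S)]
  have hi : Integrable (D.indicator fun _ => (2 : ℝ)) μ := (integrable_const _).indicator hDm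
  have hle := norm_integral_le_of_norm_le (f := fun x => f (R x) - f (S x)) hi
    (Eventually.of_forall fun x => by
      by_cases hx : x ∈ D
      · rw [indicator_of_mem hx, Real.norm_eq_abs]
        have := abs_sub (f (R x)) (f (S x))
        linarith [h1 (R x), h1 (S x)]
      · have hRS : R x = S x := by
          by_contra hne
          exact hx (subset_toMeasurable μ _ (Or.inl hne))
        simp [hx, hRS])
  rw [integral_indicator hDm, setIntegral_const, smul_eq_mul, Real.norm_eq_abs] at hle
  linarith

lemma tau_le_tau'' : (tau : TopologicalSpace (X ≃ᵐ X)) ≤ tau'' := by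
  refine le_generateFrom ?_
  rintro _ ⟨T, M, ε, hM, -, rfl⟩
  refine (@isOpen_iff_forall_mem_open _ tau _).2 fun S hS => ?_
  obtain ⟨δ, hδ, h⟩ := exists_mem_tau''Ball hM hS
  have hpos : 0 < ENNReal.ofReal (δ / 2) := ENNReal.ofReal_pos.2 (by linarith)
  refine ⟨tauBall S M (ENNReal.ofReal (δ / 2)), fun R hR => h R fun μ hμ => ?_,
    TopologicalSpace.isOpen_generateFrom_of_mem ⟨S, M, _, hM, hpos, rfl⟩, fun μ _ => ?_⟩
  · have := hM.2 μ hμ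
    have h2 := tvClose_of_measure_edis_le (by linarith) (hR μ hμ).le
    rwa [mul_div_cancel₀ δ two_ne_zero] at h2
  · simpa [Edis] using hpos

/-! ### Almost-everywhere moving automorphisms of `ℝ` -/

/-- Continuity of translation in `L¹(ℝ)`, from the continuous action of `ℝᵈᵃᵃ` on `Lp`. -/
lemma tendsto_integral_abs_translate {g : ℝ → ℝ} (hg : Integrable g) :
    Tendsto (fun a : ℝ => ∫ x, |g (x - a) - g x|) (𝓝 0) (𝓝 0) := by
  have hL : MemLp g 1 volume := memLp_one_iff_integrable.2 hg
  let G : Lp ℝ 1 (volume : Measure ℝ) := hL.toLp g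
  have : Fact ((1 : ℝ≥0∞) ≠ ∞) := ⟨ENNReal.one_ne_top⟩
  have hc : Continuous fun a : ℝ => (DomAddAct.mk (-a)) +ᵥ G :=
    (DomAddAct.continuous_mk.comp continuous_neg).vadd continuous_const
  have ht : Tendsto (fun a : ℝ => ‖(DomAddAct.mk (-a) +ᵥ G) - G‖) (𝓝 0) (𝓝 0) := by
    have := (hc.sub (continuous_const (y := G))).norm.tendsto 0
    simpa using this
  refine ht.congr fun a => ?_
  rw [L1.norm_eq_integral_norm]
  refine integral_congr_ae ?_
  have h1 := DomAddAct.vadd_Lp_ae_eq (DomAddAct.mk (-a)) G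
  have h2 : ∀ᵐ x, G x = g x := hL.coeFn_toLp
  have h3 : ∀ᵐ x, G (-a +ᵥ x) = g (-a +ᵥ x) :=
    (measurePreserving_vadd (-a) (volume : Measure ℝ)).quasiMeasurePreserving.ae h2
  filter_upwards [h1, h2, h3, Lp.coeFn_sub (DomAddAct.mk (-a) +ᵥ G) G] with x h1 h2 h3 h4
  rw [h4, Pi.sub_apply, h1, h2, Real.norm_eq_abs]
  have : g (x - a) = g (-a +ᵥ x) := by rw [vadd_eq_add]; ring_nf
  rw [this, ← h3]
  rfl

/-- Translation by `a` off a set `N` that is invariant under it, and the identity on `N`. -/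
noncomputable def translateOff (a : ℝ) (N : Set ℝ) (hN : MeasurableSet N)
    (hinv : ∀ x, x + a ∈ N ↔ x ∈ N) : ℝ ≃ᵐ ℝ := by
  classical
  exact
  { toFun := N.piecewise id (· + a)
    invFun := N.piecewise id (· - a)
    left_inv := fun x => by
      by_cases hx : x ∈ N
      · simp [hx]
      · have : x + a ∉ N := fun h => hx ((hinv x).1 h)
        simp [hx, this]
    right_inv := fun x => by
      by_cases hx : x ∈ N
      · simp [hx]
      · have : x - a ∉ N := fun h => hx (by simpa using (hinv (x - a)).2 h)
        simp [hx, this]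
    measurable_toFun := measurable_id.piecewise hN (measurable_add_const a)
    measurable_invFun := measurable_id.piecewise hN (measurable_sub_const a) }

lemma translateOff_of_mem {a : ℝ} {N : Set ℝ} {hN : MeasurableSet N}
    {hinv : ∀ x, x + a ∈ N ↔ x ∈ N} {x : ℝ} (hx : x ∈ N) : translateOff a N hN hinv x = x := by
  classical
  exact piecewise_eq_of_mem N id (· + a) hx

lemma translateOff_of_notMem {a : ℝ} {N : Set ℝ} {hN : MeasurableSet N}
    {hinv : ∀ x, x + a ∈ N ↔ x ∈ N} {x : ℝ} (hx : x ∉ N) :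
    translateOff a N hN hinv x = x + a := by
  classical
  exact piecewise_eq_of_notMem N id (· + a) hx

/-- If `N` is Lebesgue-null and carries the singular part of `ν`, only the absolutely continuous
part contributes to the change of `ν` under `translateOff a N`. -/
lemma tvClose_translateOff (ν : Measure ℝ) [IsFiniteMeasure ν] {a : ℝ} {N : Set ℝ}
    (hN : MeasurableSet N) (hinv : ∀ x, x + a ∈ N ↔ x ∈ N) (hN0 : volume N = 0)
    (hNs : ν.singularPart volume Nᶜ = 0) :
    TVClose ν (translateOff a N hN hinv) (MeasurableEquiv.refl ℝ)
      (∫ x, |(ν.rnDeriv volume (x - a)).toReal - (ν.rnDeriv volume x).toReal|) := by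
  intro f hf h1
  set T := translateOff a N hN hinv
  set g : ℝ → ℝ := fun x => (ν.rnDeriv volume x).toReal with hgdef
  have hg : Integrable g := Measure.integrable_toReal_rnDeriv
  have hfT : Measurable fun x => f (T x) := hf.comp T.measurable
  have hsing : ∫ x, f (T x) ∂(ν.singularPart volume) = ∫ x, f x ∂(ν.singularPart volume) := by
    refine integral_congr_ae ?_
    have : ∀ᵐ x ∂(ν.singularPart volume), x ∈ N := hNs
    filter_upwards [this] with x hx
    rw [show T x = x from translateOff_of_mem hx]
  have hdec : ∀ F : ℝ → ℝ, Measurable F → (∀ x, |F x| ≤ 1) →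
      ∫ x, F x ∂ν = (∫ x, F x ∂(ν.singularPart volume)) + ∫ x, g x * F x := by
    intro F hF hF1
    have hb : ∀ (ρ : Measure ℝ) [IsFiniteMeasure ρ], Integrable F ρ := fun ρ _ =>
      Integrable.of_bound hF.aestronglyMeasurable 1 (Eventually.of_forall fun x => hF1 x)
    have hle : volume.withDensity (ν.rnDeriv volume) ≤ ν := Measure.withDensity_rnDeriv_le ν volume
    have : IsFiniteMeasure (volume.withDensity (ν.rnDeriv volume)) := isFiniteMeasure_of_le ν hle
    conv_lhs => rw [← Measure.singularPart_add_rnDeriv ν volume]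
    rw [integral_add_measure (hb _) (hb _),
      integral_withDensity_eq_integral_toReal_smul (Measure.measurable_rnDeriv _ _)
        (Measure.rnDeriv_lt_top _ _)]
    rfl
  have hac : ∫ x, g x * f (T x) = ∫ x, g (x - a) * f x := by
    rw [← integral_add_right_eq_self (fun x => g (x - a) * f x) a]
    refine integral_congr_ae ?_
    filter_upwards [measure_eq_zero_iff_ae_notMem.1 hN0] with x hx
    rw [show T x = x + a from translateOff_of_notMem hx, add_sub_cancel_right]
  have hi1 : Integrable fun x => g (x - a) * f x :=
    (hg.comp_sub_right a).mul_bdd (c := 1) hf.aestronglyMeasurable (Eventually.of_forall fun x => h1 x)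
  have hi2 : Integrable fun x => g x * f x :=
    hg.mul_bdd (c := 1) hf.aestronglyMeasurable (Eventually.of_forall fun x => h1 x)
  rw [hdec _ hfT fun x => h1 (T x), show (∫ x, f (MeasurableEquiv.refl ℝ x) ∂ν) = ∫ x, f x ∂ν
    from rfl, hdec f hf h1, hsing, hac, add_sub_add_left_eq_sub, ← integral_sub hi1 hi2,
    ← Real.norm_eq_abs]
  refine norm_integral_le_of_norm_le ((hg.comp_sub_right a).sub hg).abs
    (Eventually.of_forall fun x => ?_)
  rw [← sub_mul, Real.norm_eq_abs, abs_mul]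
  exact mul_le_of_le_one_right (abs_nonneg _) (h1 x)

/-- An automorphism can move Lebesgue-almost every point of `ℝ` while hardly changing finitely many
prescribed measures. -/
lemma exists_moving_equiv {M : Set (Measure ℝ)} (hM : IsProbFamily M) {δ : ℝ} (hδ : 0 < δ) :
    ∃ T : ℝ ≃ᵐ ℝ, (∀ᵐ x, T x ≠ x) ∧ ∀ ν ∈ M, TVClose ν T (MeasurableEquiv.refl ℝ) δ := by
  have hev : ∀ᶠ a : ℝ in 𝓝 0, ∀ ν ∈ M,
      (∫ x, |(ν.rnDeriv volume (x - a)).toReal - (ν.rnDeriv volume x).toReal|) < δ := by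
    rw [hM.1.eventually_all]
    intro ν hν
    have := hM.2 ν hν
    exact (tendsto_integral_abs_translate Measure.integrable_toReal_rnDeriv).eventually_lt_const hδ
  obtain ⟨a, ha, ha0 : a ≠ 0⟩ :=
    ((hev.filter_mono nhdsWithin_le_nhds).and (self_mem_nhdsWithin (s := {(0 : ℝ)}ᶜ))).exists
  choose s hsm hs1 hs2 using fun ν : Measure ℝ => Measure.mutuallySingular_singularPart ν volume
  let N₀ : Set ℝ := ⋃ ν ∈ M, (s ν)ᶜ
  have hN₀m : MeasurableSet N₀ := hM.1.measurableSet_biUnion fun ν _ => (hsm ν).compl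
  have hN₀0 : volume N₀ = 0 := (measure_biUnion_null_iff hM.1.countable).2 fun ν _ => hs2 ν
  -- The saturation of `N₀` under translation by multiples of `a`.
  let N : Set ℝ := ⋃ k : ℤ, (fun x => x + k * a) ⁻¹' N₀
  have hNm : MeasurableSet N := .iUnion fun k => measurable_add_const _ hN₀m
  have hN0 : volume N = 0 := measure_iUnion_null fun k => by
    rw [measure_preimage_add_right, hN₀0]
  have hinv : ∀ x, x + a ∈ N ↔ x ∈ N := by
    intro x
    simp only [N, mem_iUnion, mem_preimage]
    constructor
    · rintro ⟨k, hk⟩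
      exact ⟨k + 1, by push_cast; rwa [show x + (k + 1) * a = x + a + k * a by ring]⟩
    · rintro ⟨k, hk⟩
      exact ⟨k - 1, by push_cast; rwa [show x + a + (k - 1) * a = x + k * a by ring]⟩
  refine ⟨translateOff a N hNm hinv, ?_, fun ν hν => ?_⟩
  · filter_upwards [measure_eq_zero_iff_ae_notMem.1 hN0] with x hx
    rw [translateOff_of_notMem hx]
    simpa using ha0
  · have := hM.2 ν hν
    have hsub : Nᶜ ⊆ s ν := by
      intro x hx
      by_contra hxs
      exact hx (mem_iUnion.2 ⟨0, by simpa [N₀] using ⟨ν, hν, hxs⟩⟩)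
    exact fun f hf h1 => (tvClose_translateOff ν hNm hinv hN0
      (measure_mono_null hsub (hs1 ν)) f hf h1).trans (ha ν hν).le

/-- The topology `τ` is strictly stronger (finer) than `τ''`: every `τ''`-open set is
`τ`-open, but there exists a `τ`-open set which is not `τ''`-open. -/
theorem tau_lt_tau'' {X : Type*} [MeasurableSpace X] [StandardBorelSpace X] [Uncountable X] :
    (tau : TopologicalSpace (X ≃ᵐ X)) < tau'' := by
  refine lt_of_le_not_ge tau_le_tau'' fun hle => ?_
  let e : X ≃ᵐ ℝ := PolishSpace.measurableEquivOfNotCountable (not_countable_iff.2 inferInstance)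
    (not_countable_iff.2 inferInstance)
  let γ : Measure ℝ := ProbabilityTheory.gaussianReal 0 1
  have hγ : γ ≪ volume := ProbabilityTheory.gaussianReal_absolutelyContinuous 0 one_ne_zero
  let μ : Measure X := γ.map e.symm
  have hμ : IsProbabilityMeasure μ :=
    Measure.isProbabilityMeasure_map e.symm.measurable.aemeasurable
  have hopen : IsOpen[tau] (tauBall (MeasurableEquiv.refl X) {μ} 1) :=
    TopologicalSpace.isOpen_generateFrom_of_mem
      ⟨_, {μ}, 1, ⟨finite_singleton μ, by rintro _ rfl; exact hμ⟩, one_pos, rfl⟩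
  have hid : MeasurableEquiv.refl X ∈ tauBall (MeasurableEquiv.refl X) {μ} 1 := by
    simp [tauBall, Edis]
  obtain ⟨M, δ, hM, hδ, h⟩ := exists_ball_subset_of_isOpen (hle _ hopen) hid
  have hM' : IsProbFamily ((fun ν : Measure X => ν.map e) '' M) := by
    refine ⟨hM.1.image _, ?_⟩
    rintro _ ⟨ν, hν, rfl⟩
    have := hM.2 ν hν
    exact Measure.isProbabilityMeasure_map e.measurable.aemeasurable
  obtain ⟨T, hT, hTM⟩ := exists_moving_equiv hM' hδ
  let R : X ≃ᵐ X := (e.trans T).trans e.symm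
  have hR : R ∈ tauBall (MeasurableEquiv.refl X) {μ} 1 := by
    refine h R fun ν hν f hf h1 => ?_
    have := hTM _ (mem_image_of_mem _ hν) (fun y => f (e.symm y)) (hf.comp e.symm.measurable)
      fun y => h1 _
    rw [integral_map_equiv, integral_map_equiv] at this
    simpa [R] using this
  have hmoved : ∀ᵐ x ∂μ, x ∈ Edis R (MeasurableEquiv.refl X) := by
    refine (e.symm.measurableEmbedding.ae_map_iff).2 ?_
    filter_upwards [hγ.ae_le hT] with y hy
    refine Or.inl ?_
    simpa [R] using hy
  have h1 : μ (Edis R (MeasurableEquiv.refl X)) = 1 := by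
    have huniv : Edis R (MeasurableEquiv.refl X) =ᵐ[μ] univ := eventuallyEq_univ.2 hmoved
    rw [measure_congr huniv, measure_univ]
  exact (hR μ rfl).ne h1

end BDK
end

section
/- The three topologies τ'', τ̃ and τ̄ on Aut(X,𝓑) are pairwise equivalent. -/
/-!
Write `d_μ(S, T) = sup_F |μ(T F) - μ(S F)|`, the distance of `S⁻¹_* μ` and `T⁻¹_* μ` in variation.
Each of the three topologies is generated by the balls of a family of pseudometrics on `X ≃ᵐ X`
indexed by probability measures, so `topOf_le` reduces each comparison to bounding one pseudometric
by a multiple of another, where the measure on the right may depend on the centre of the ball.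

* `τ̃` against `τ̄`: the two-set partition `{F, Fᶜ}` gives `d_μ ≤ d̃_μ`, and collecting the cells
  of a partition according to the sign of `μ(T A) - μ(S A)` gives `d̃_μ ≤ 2 d_μ`.
* `τ''` against `τ̄`: here `S_* μ` appears in place of `S⁻¹_* μ`. Because pushforward preserves the
  variation norm, `‖S_* μ - T_* μ‖ = ‖ν - S_* T⁻¹_* ν‖` with `ν = T_* μ`, which after moving `S` across
  is `‖S⁻¹_* ν - T⁻¹_* ν‖`; symmetrically, `T⁻¹_* μ` serves for the converse. Hence inversion causes
  no loss. The passage between test functions and test sets is by the layer-cake formula in one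
  direction (`abs_integral_sub_le`) and by indicator functions in the other.
-/

open MeasureTheory Set Filter Topology
open scoped ENNReal

namespace BDK

variable {X : Type*} [MeasurableSpace X]

/-! ### Topologies from families of pseudometrics -/

/-- The topology generated by the balls `{S | ∀ μ ∈ M, D μ S T < ε}` of a family of distance
functions `D μ`, where `M` ranges over finite families of probability measures. -/
def topOf (D : Measure X → (X ≃ᵐ X) → (X ≃ᵐ X) → ℝ) : TopologicalSpace (X ≃ᵐ X) :=
  .generateFrom {O | ∃ (T : X ≃ᵐ X) (M : Set (Measure X)) (ε : ℝ),
    IsProbFamily M ∧ 0 < ε ∧ O = {S | ∀ μ ∈ M, D μ S T < ε}}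

/-- The distance defining `τ''`. -/
noncomputable def dFun (μ : Measure X) (S T : X ≃ᵐ X) : ℝ :=
  ⨆ f ∈ (BorelUnitBall : Set (X → ℝ)),
    |(∫ x, f x ∂(Measure.map (⇑S) μ)) - ∫ x, f x ∂(Measure.map (⇑T) μ)|

/-- The distance defining `τ̃`. -/
noncomputable def dPart (μ : Measure X) (S T : X ≃ᵐ X) : ℝ :=
  ⨆ P ∈ {P : Finset (Set X) | IsBorelPartition P},
    ∑ A ∈ P, |(μ (T '' A)).toReal - (μ (S '' A)).toReal|

/-- The distance defining `τ̄`. -/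
noncomputable def dSet (μ : Measure X) (S T : X ≃ᵐ X) : ℝ :=
  ⨆ F ∈ {F : Set X | MeasurableSet F}, |(μ (T '' F)).toReal - (μ (S '' F)).toReal|

/-- The comparison of `D` with `D'` may change the measure from `μ` to some `ν` that depends on the
centre `S`: this is harmless because a neighbourhood of `S` is only tested near `S`. -/
lemma topOf_le {D D' : Measure X → (X ≃ᵐ X) → (X ≃ᵐ X) → ℝ}
    (htri : ∀ μ, IsProbabilityMeasure μ → ∀ S R T, D μ S T ≤ D μ S R + D μ R T)
    (hself : ∀ μ S, D' μ S S = 0)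
    (hle : ∀ μ, IsProbabilityMeasure μ → ∀ S, ∃ ν : Measure X, IsProbabilityMeasure ν ∧
      ∀ S', D μ S' S ≤ 2 * D' ν S' S) :
    topOf D' ≤ topOf D := by
  refine le_generateFrom ?_
  rintro O ⟨T, M, ε, hM, hε, rfl⟩
  let _ := topOf D'
  refine isOpen_iff_mem_nhds.2 fun S hS => ?_
  have : {S | ∀ μ ∈ M, D μ S T < ε} = ⋂ μ ∈ M, {S | D μ S T < ε} := by ext; simp
  rw [this]
  refine (biInter_mem hM.1).2 fun μ hμ => ?_
  obtain ⟨ν, hν, h⟩ := hle μ (hM.2 μ hμ) S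
  have hpos : 0 < (ε - D μ S T) / 2 := by have := hS μ hμ; linarith
  have hopen : IsOpen {S' | ∀ ν' ∈ ({ν} : Set (Measure X)), D' ν' S' S < (ε - D μ S T) / 2} :=
    TopologicalSpace.isOpen_generateFrom_of_mem
      ⟨S, {ν}, _, ⟨finite_singleton _, by simpa using hν⟩, hpos, rfl⟩
  refine mem_of_superset (hopen.mem_nhds fun ν' _ => by rwa [hself]) ?_
  intro S' hS'
  have h1 := hS' ν rfl
  have h2 := h S'
  have h3 := htri μ (hM.2 μ hμ) S' S T
  simp only [mem_ofPred_eq]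
  linarith

/-! ### Suprema of bounded real functions over a set -/

section BoundedSup
variable {ι : Type*} {s : Set ι} {g g₁ g₂ : ι → ℝ} {B : ℝ}

/-- The bound `B` is needed because the supremum of an unbounded set of reals is `0`. It is only
assumed on `s`: for `y ∉ s` the inner supremum is empty, hence `0`. -/
lemma le_biSup_real (hB : ∀ x ∈ s, g x ≤ B) {x : ι} (hx : x ∈ s) :
    g x ≤ ⨆ y ∈ s, g y := by
  have hin : ∀ y ∈ s, (⨆ _ : y ∈ s, g y) = g y := fun y hy => by
    have : Nonempty (y ∈ s) := ⟨hy⟩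
    exact ciSup_const
  rw [← hin x hx]
  refine le_ciSup (f := fun y => ⨆ _ : y ∈ s, g y) ⟨max B 0, ?_⟩ x
  rintro _ ⟨y, rfl⟩
  exact Real.iSup_le (fun hy => (hB y hy).trans (le_max_left _ _)) (le_max_right _ _)

lemma biSup_real_le (hB0 : 0 ≤ B) (hB : ∀ x ∈ s, g x ≤ B) : (⨆ y ∈ s, g y) ≤ B :=
  Real.iSup_le (fun y => Real.iSup_le (fun hy => hB y hy) hB0) hB0

lemma biSup_real_nonneg (h0 : ∀ x, 0 ≤ g x) : 0 ≤ ⨆ y ∈ s, g y :=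
  Real.iSup_nonneg fun y => Real.iSup_nonneg fun _ => h0 y

lemma biSup_real_tri (h1 : ∀ x, 0 ≤ g₁ x) (h2 : ∀ x, 0 ≤ g₂ x) (hB1 : ∀ x ∈ s, g₁ x ≤ B)
    (hB2 : ∀ x ∈ s, g₂ x ≤ B) (h : ∀ x, g x ≤ g₁ x + g₂ x) :
    (⨆ y ∈ s, g y) ≤ (⨆ y ∈ s, g₁ y) + ⨆ y ∈ s, g₂ y :=
  biSup_real_le (add_nonneg (biSup_real_nonneg h1) (biSup_real_nonneg h2)) fun x hx =>
    (h x).trans (add_le_add (le_biSup_real hB1 hx) (le_biSup_real hB2 hx))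

end BoundedSup

/-! ### Comparison of the three distances -/

lemma abs_toReal_sub_le_one (μ : Measure X) [IsProbabilityMeasure μ] (A B : Set X) :
    |(μ A).toReal - (μ B).toReal| ≤ 1 := by
  have hA : (μ A).toReal ≤ 1 := measureReal_le_one
  have hB : (μ B).toReal ≤ 1 := measureReal_le_one
  have hA0 : 0 ≤ (μ A).toReal := ENNReal.toReal_nonneg
  have hB0 : 0 ≤ (μ B).toReal := ENNReal.toReal_nonneg
  rw [abs_le]; constructor <;> linarith

lemma le_dSet (μ : Measure X) [IsProbabilityMeasure μ] (S T : X ≃ᵐ X) {F : Set X}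
    (hF : MeasurableSet F) : |(μ (T '' F)).toReal - (μ (S '' F)).toReal| ≤ dSet μ S T :=
  le_biSup_real (s := {F : Set X | MeasurableSet F})
    (g := fun F => |(μ (T '' F)).toReal - (μ (S '' F)).toReal|)
    (fun _ _ => abs_toReal_sub_le_one μ _ _) hF

lemma dSet_nonneg (μ : Measure X) (S T : X ≃ᵐ X) : 0 ≤ dSet μ S T :=
  biSup_real_nonneg fun _ => abs_nonneg _

/-- Layer-cake: after the shift `f + 1 ∈ [0, 2]`, the difference of integrals is an average over
`t ∈ (0, 2]` of differences of measures of superlevel sets. -/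
lemma abs_integral_sub_le (P Q : Measure X) [IsProbabilityMeasure P] [IsProbabilityMeasure Q]
    {f : X → ℝ} (hf : f ∈ (BorelUnitBall : Set (X → ℝ))) {d : ℝ}
    (hd : ∀ F, MeasurableSet F → |P.real F - Q.real F| ≤ d) :
    |(∫ x, f x ∂P) - ∫ x, f x ∂Q| ≤ 2 * d := by
  obtain ⟨hm, hb⟩ := hf
  have hint : ∀ ρ : Measure X, IsProbabilityMeasure ρ → Integrable f ρ := fun ρ _ =>
    Integrable.of_bound hm.aestronglyMeasurable 1 (Eventually.of_forall fun x => by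
      simpa using hb x)
  have key : ∀ ρ : Measure X, IsProbabilityMeasure ρ →
      (∫ x, f x ∂ρ) + 1 = ∫ t in Ioc (0 : ℝ) 2, ρ.real {x | t ≤ f x + 1} := fun ρ _ => by
    have hi : Integrable (fun x => f x + 1) ρ := (hint ρ ‹_›).add (integrable_const _)
    have h := hi.integral_eq_integral_Ioc_meas_le (M := 2)
      (Eventually.of_forall fun x => by have := abs_le.1 (hb x); simp; linarith)
      (Eventually.of_forall fun x => by have := abs_le.1 (hb x); simp; linarith)
    rw [← h, integral_add (hint ρ ‹_›) (integrable_const _)]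
    simp
  have hanti : ∀ ρ : Measure X, IsProbabilityMeasure ρ →
      IntegrableOn (fun t : ℝ => ρ.real {x | t ≤ f x + 1}) (Ioc 0 2) := fun ρ _ => by
    have : Antitone (fun t : ℝ => ρ.real {x | t ≤ f x + 1}) := fun a b hab =>
      measureReal_mono (fun x (hx : b ≤ f x + 1) => hab.trans hx)
    exact Integrable.of_bound this.measurable.aestronglyMeasurable 1
      (Eventually.of_forall fun x => by
        rw [Real.norm_of_nonneg measureReal_nonneg]; exact measureReal_le_one)
  have heq : (∫ x, f x ∂P) - ∫ x, f x ∂Q =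
      ∫ t in Ioc (0 : ℝ) 2, (P.real {x | t ≤ f x + 1} - Q.real {x | t ≤ f x + 1}) := by
    rw [integral_sub (hanti P ‹_›) (hanti Q ‹_›), ← key P ‹_›, ← key Q ‹_›]; ring
  rw [heq, ← Real.norm_eq_abs]
  refine (norm_setIntegral_le_of_norm_le_const (C := d) (by simp) fun t _ => ?_).trans ?_
  · exact hd _ (measurableSet_le measurable_const (hm.add_const 1))
  · simp [mul_comm]

lemma abs_integral_sub_le_two (P Q : Measure X) [IsProbabilityMeasure P] [IsProbabilityMeasure Q]
    {f : X → ℝ} (hf : f ∈ (BorelUnitBall : Set (X → ℝ))) :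
    |(∫ x, f x ∂P) - ∫ x, f x ∂Q| ≤ 2 := by
  refine (abs_integral_sub_le P Q hf (d := 1) fun F _ => ?_).trans (by norm_num)
  have hP : P.real F ≤ 1 := measureReal_le_one
  have hQ : Q.real F ≤ 1 := measureReal_le_one
  have hP0 : 0 ≤ P.real F := measureReal_nonneg
  have hQ0 : 0 ≤ Q.real F := measureReal_nonneg
  rw [abs_le]; constructor <;> linarith

lemma isProb_map (μ : Measure X) [IsProbabilityMeasure μ] (S : X ≃ᵐ X) :
    IsProbabilityMeasure (μ.map S) :=
  Measure.isProbabilityMeasure_map S.measurable.aemeasurable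

lemma le_dFun (μ : Measure X) [IsProbabilityMeasure μ] (S T : X ≃ᵐ X) {f : X → ℝ}
    (hf : f ∈ (BorelUnitBall : Set (X → ℝ))) :
    |(∫ x, f x ∂(μ.map S)) - ∫ x, f x ∂(μ.map T)| ≤ dFun μ S T :=
  have := isProb_map μ S
  have := isProb_map μ T
  le_biSup_real (s := (BorelUnitBall : Set (X → ℝ)))
    (g := fun f => |(∫ x, f x ∂(μ.map S)) - ∫ x, f x ∂(μ.map T)|)
    (fun _ hf => abs_integral_sub_le_two _ _ hf) hf

/-- Bounded by `2 * dSet` because the cells where `μ (T A) - μ (S A)` is nonnegative have a Borel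
union, and likewise the remaining ones. -/
lemma sum_le_dSet (μ : Measure X) [IsProbabilityMeasure μ] (S T : X ≃ᵐ X) {P : Finset (Set X)}
    (hP : IsBorelPartition P) :
    ∑ A ∈ P, |(μ (T '' A)).toReal - (μ (S '' A)).toReal| ≤ 2 * dSet μ S T := by
  classical
  have hunion : ∀ Q ⊆ P, ∀ R : X ≃ᵐ X,
      (μ (R '' ⋃ A ∈ Q, A)).toReal = ∑ A ∈ Q, (μ (R '' A)).toReal := fun Q hQ R => by
    rw [image_iUnion₂, measure_biUnion_finset, ENNReal.toReal_sum fun _ _ => measure_ne_top _ _]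
    · intro A hA B hB hAB
      exact (disjoint_image_iff R.injective).2 (hP.2.1 (hQ hA) (hQ hB) hAB)
    · exact fun A hA => R.measurableSet_image.2 (hP.1 A (hQ hA))
  have hpart : ∀ Q ⊆ P, |∑ A ∈ Q, ((μ (T '' A)).toReal - (μ (S '' A)).toReal)| ≤ dSet μ S T :=
    fun Q hQ => by
      rw [Finset.sum_sub_distrib, ← hunion Q hQ T, ← hunion Q hQ S]
      exact le_dSet μ S T (Finset.measurableSet_biUnion Q fun A hA => hP.1 A (hQ hA))
  rw [← Finset.sum_filter_add_sum_filter_not P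
    (fun A => 0 ≤ (μ (T '' A)).toReal - (μ (S '' A)).toReal), two_mul]
  refine add_le_add ?_ ?_
  · rw [Finset.sum_congr rfl fun A hA => abs_of_nonneg (Finset.mem_filter.1 hA).2]
    exact (le_abs_self _).trans (hpart _ (Finset.filter_subset _ _))
  · rw [Finset.sum_congr rfl fun A hA => abs_of_neg (not_le.1 (Finset.mem_filter.1 hA).2),
      Finset.sum_neg_distrib]
    exact (neg_le_abs _).trans (hpart _ (Finset.filter_subset _ _))

lemma le_dPart (μ : Measure X) [IsProbabilityMeasure μ] (S T : X ≃ᵐ X) {P : Finset (Set X)}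
    (hP : IsBorelPartition P) :
    ∑ A ∈ P, |(μ (T '' A)).toReal - (μ (S '' A)).toReal| ≤ dPart μ S T :=
  le_biSup_real (s := {P : Finset (Set X) | IsBorelPartition P})
    (g := fun P => ∑ A ∈ P, |(μ (T '' A)).toReal - (μ (S '' A)).toReal|)
    (fun _ hP => sum_le_dSet μ S T hP) hP

lemma dPart_le (μ : Measure X) [IsProbabilityMeasure μ] (S T : X ≃ᵐ X) :
    dPart μ S T ≤ 2 * dSet μ S T :=
  biSup_real_le (mul_nonneg zero_le_two (dSet_nonneg μ S T)) fun _ hP => sum_le_dSet μ S T hP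

lemma dSet_le_dPart (μ : Measure X) [IsProbabilityMeasure μ] (S T : X ≃ᵐ X) :
    dSet μ S T ≤ dPart μ S T := by
  classical
  refine biSup_real_le (biSup_real_nonneg fun _ => Finset.sum_nonneg fun _ _ => abs_nonneg _)
    fun F (hF : MeasurableSet F) => ?_
  have hP : IsBorelPartition ({F, Fᶜ} : Finset (Set X)) := by
    refine ⟨by simp [hF], ?_, by simp⟩
    rw [Finset.coe_pair]
    rintro A (rfl | rfl) B (rfl | rfl) hAB
    exacts [(hAB rfl).elim, disjoint_compl_right, disjoint_compl_left, (hAB rfl).elim]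
  exact (Finset.single_le_sum
    (f := fun A => |(μ (T '' A)).toReal - (μ (S '' A)).toReal|)
    (fun _ _ => abs_nonneg _) (Finset.mem_insert_self F {Fᶜ})).trans (le_dPart μ S T hP)

/-- The set `F` is tested on the left through `S⁻¹ F` on the right. -/
lemma dFun_le_dSet (μ : Measure X) [IsProbabilityMeasure μ] (S T : X ≃ᵐ X) :
    dFun μ S T ≤ 2 * dSet (μ.map T) S T := by
  have := isProb_map μ S
  have := isProb_map μ T
  refine biSup_real_le (mul_nonneg zero_le_two (dSet_nonneg _ S T)) fun f hf =>
    abs_integral_sub_le _ _ hf fun F hF => ?_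
  have h := le_dSet (μ.map T) S T (S.measurable hF)
  have h1 : (μ.map T) (T '' (S ⁻¹' F)) = (μ.map S) F := by
    rw [T.map_apply, preimage_image_eq _ T.injective, S.map_apply]
  rwa [h1, image_preimage_eq _ S.surjective] at h

/-- The set `F` is tested on the left through the indicator function of `S F` on the right. -/
lemma dSet_le_dFun (μ : Measure X) [IsProbabilityMeasure μ] (S T : X ≃ᵐ X) :
    dSet μ S T ≤ dFun (μ.map T.symm) S T := by
  have := isProb_map μ T.symm
  refine biSup_real_le (biSup_real_nonneg fun _ => abs_nonneg _)
    fun F (hF : MeasurableSet F) => ?_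
  have hSF : MeasurableSet (S '' F) := S.measurableSet_image.2 hF
  have h := le_dFun (μ.map T.symm) S T (f := (S '' F).indicator 1)
    ⟨measurable_one.indicator hSF, fun x => by
      by_cases hx : x ∈ S '' F <;> simp [hx]⟩
  rw [integral_indicator_one hSF, integral_indicator_one hSF] at h
  have h1 : ((μ.map T.symm).map S).real (S '' F) = (μ (T '' F)).toReal := by
    rw [Measure.real, S.map_apply, preimage_image_eq _ S.injective, T.symm.map_apply,
      ← T.image_eq_preimage_symm]
  have h2 : ((μ.map T.symm).map T).real (S '' F) = (μ (S '' F)).toReal := by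
    rw [Measure.real, MeasurableEquiv.map_map_symm]
  rwa [h1, h2] at h

/-! ### Triangle inequalities and equality of the topologies -/

lemma dSet_tri (μ : Measure X) [IsProbabilityMeasure μ] (S R T : X ≃ᵐ X) :
    dSet μ S T ≤ dSet μ S R + dSet μ R T :=
  biSup_real_tri (B := 1) (fun _ => abs_nonneg _) (fun _ => abs_nonneg _)
    (fun _ _ => abs_toReal_sub_le_one μ _ _) (fun _ _ => abs_toReal_sub_le_one μ _ _)
    fun F => (abs_sub_le _ (μ (R '' F)).toReal _).trans (add_comm _ _).le

lemma dPart_tri (μ : Measure X) [IsProbabilityMeasure μ] (S R T : X ≃ᵐ X) :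
    dPart μ S T ≤ dPart μ S R + dPart μ R T :=
  biSup_real_tri (B := max (2 * dSet μ S R) (2 * dSet μ R T))
    (fun _ => Finset.sum_nonneg fun _ _ => abs_nonneg _)
    (fun _ => Finset.sum_nonneg fun _ _ => abs_nonneg _)
    (fun _ hP => (sum_le_dSet μ _ _ hP).trans (le_max_left _ _))
    (fun _ hP => (sum_le_dSet μ _ _ hP).trans (le_max_right _ _))
    fun P => by
      rw [← Finset.sum_add_distrib]
      exact Finset.sum_le_sum fun A _ =>
        (abs_sub_le _ (μ (R '' A)).toReal _).trans (add_comm _ _).le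

lemma dFun_tri (μ : Measure X) [IsProbabilityMeasure μ] (S R T : X ≃ᵐ X) :
    dFun μ S T ≤ dFun μ S R + dFun μ R T :=
  have := isProb_map μ S
  have := isProb_map μ R
  have := isProb_map μ T
  biSup_real_tri (B := 2) (fun _ => abs_nonneg _) (fun _ => abs_nonneg _)
    (fun _ hf => abs_integral_sub_le_two _ _ hf) (fun _ hf => abs_integral_sub_le_two _ _ hf)
    fun _ => abs_sub_le _ _ _

lemma topOf_dFun_eq : topOf (dFun (X := X)) = topOf dSet := by
  refine le_antisymm
    (topOf_le (fun μ _ => dSet_tri μ) (fun μ S => by simp [dFun]) fun μ _ S =>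
      ⟨_, isProb_map μ S.symm, fun S' => ?_⟩)
    (topOf_le (fun μ _ => dFun_tri μ) (fun μ S => by simp [dSet]) fun μ _ S =>
      ⟨_, isProb_map μ S, fun S' => dFun_le_dSet μ S' S⟩)
  have h := dSet_le_dFun μ S' S
  linarith [dSet_nonneg μ S' S]

lemma topOf_dPart_eq : topOf (dPart (X := X)) = topOf dSet := by
  refine le_antisymm
    (topOf_le (fun μ _ => dSet_tri μ) (fun μ S => by simp [dPart]) fun μ hμ S =>
      ⟨μ, hμ, fun S' => ?_⟩)
    (topOf_le (fun μ _ => dPart_tri μ) (fun μ S => by simp [dSet]) fun μ hμ S =>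
      ⟨μ, hμ, fun S' => dPart_le μ S' S⟩)
  have h := dSet_le_dPart μ S' S
  linarith [dSet_nonneg μ S' S]

/-- The three topologies `τ''`, `τ̃` and `τ̄` are pairwise equivalent. -/
theorem tau''_eq_tauTilde_eq_tauBar {X : Type*} [MeasurableSpace X] [StandardBorelSpace X]
    [Uncountable X] :
    (tau'' : TopologicalSpace (X ≃ᵐ X)) = tauTilde ∧
    (tau'' : TopologicalSpace (X ≃ᵐ X)) = tauBar ∧
    (tauTilde : TopologicalSpace (X ≃ᵐ X)) = tauBar := by
  have h1 : (tau'' : TopologicalSpace (X ≃ᵐ X)) = tauBar := topOf_dFun_eq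
  have h2 : (tauTilde : TopologicalSpace (X ≃ᵐ X)) = tauBar := topOf_dPart_eq
  exact ⟨h1.trans h2.symm, h1, h2⟩

end BDK
end

section
/- The uniform topology τ on Aut(X,𝓑) is strictly stronger than the topology p̄: every p̄-open set is τ-open, but there exists a τ-open set that is not p̄-open. -/
/-!
`τ` refines `p̄` because `S '' A` and `R '' A` can only differ on `Edis S R`, so a `p̄`-ball
around any of its points contains a `τ`-ball.

For strictness, every `p̄`-open set containing the identity contains all automorphisms that
leave each member of some finite Borel family invariant (`exists_family_of_pBar_open`). Such an
automorphism can nevertheless move all but countably many points: the family generates a finite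
Borel partition, each uncountable atom is Borel isomorphic to `ℝ`, and transporting `x ↦ -x` to
every such atom gives an involution with countably many fixed points
(`exists_invariant_moving_cocountable`). For a non-atomic probability measure `μ` the `τ`-ball
around the identity given by `μ` and `1` contains no such involution, so it is not `p̄`-open.
-/

open MeasureTheory Set Filter Topology
open scoped ENNReal

namespace BDK

variable {X : Type*} [MeasurableSpace X]

lemma Edis_symm (S T : X ≃ᵐ X) : Edis S.symm T.symm = Edis S T := by
  simp only [Edis, MeasurableEquiv.symm_symm, union_comm]

lemma symmDiff_image_subset (R S T : X ≃ᵐ X) (A : Set X) :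
    symmDiff (R '' A) (T '' A) ⊆ symmDiff (S '' A) (T '' A) ∪ Edis R S := by
  intro x hx
  by_cases h : R.symm x = S.symm x
  · left
    simpa only [Set.mem_symmDiff, MeasurableEquiv.image_eq_preimage_symm, mem_preimage, h]
      using hx
  · exact .inr (.inr h)

lemma isOpen_tau_single (T : X ≃ᵐ X) (A : Set X) (μ : Measure X) [IsProbabilityMeasure μ]
    (ε : ℝ≥0∞) :
    IsOpen[tau] {S : X ≃ᵐ X |
      μ (symmDiff (S '' A) (T '' A)) + μ (symmDiff (S.symm '' A) (T.symm '' A)) < ε} := by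
  let _ : TopologicalSpace (X ≃ᵐ X) := tau
  rw [isOpen_iff_forall_mem_open]
  intro S hS
  simp only [mem_ofPred_eq] at hS
  set v := μ (symmDiff (S '' A) (T '' A)) + μ (symmDiff (S.symm '' A) (T.symm '' A)) with hv
  have hδ : 0 < (ε - v) / 2 := ENNReal.half_pos (tsub_pos_of_lt hS).ne'
  refine ⟨tauBall S {μ} ((ε - v) / 2), ?_, ?_, ?_⟩
  · intro R hR
    have h : μ (Edis R S) < (ε - v) / 2 := hR μ rfl
    have h1 := (measure_mono (μ := μ) (symmDiff_image_subset R S T A)).trans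
      (measure_union_le _ _)
    have h2 := (measure_mono (μ := μ) (symmDiff_image_subset R.symm S.symm T.symm A)).trans
      (measure_union_le _ _)
    rw [Edis_symm] at h2
    have h3 : μ (Edis R S) + μ (Edis R S) < ε - v := by
      simpa only [ENNReal.add_halves] using ENNReal.add_lt_add h h
    calc _ ≤ _ := add_le_add h1 h2
      _ = v + (μ (Edis R S) + μ (Edis R S)) := by rw [hv]; abel
      _ < ε := lt_tsub_iff_left.mp h3
  · refine TopologicalSpace.isOpen_generateFrom_of_mem ⟨S, {μ}, _, ⟨finite_singleton μ, ?_⟩, hδ, rfl⟩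
    rintro ν rfl
    infer_instance
  · rintro ν rfl
    simpa [Edis] using hδ

lemma tau_le_pBar : (tau : TopologicalSpace (X ≃ᵐ X)) ≤ pBar := by
  refine le_generateFrom ?_
  rintro O ⟨T, F, M, ε, hF, hM, -, rfl⟩
  let _ : TopologicalSpace (X ≃ᵐ X) := tau
  have h : pBarBall T F M ε = ⋂ A ∈ F, ⋂ μ ∈ M, {S : X ≃ᵐ X |
      μ (symmDiff (S '' A) (T '' A)) + μ (symmDiff (S.symm '' A) (T.symm '' A)) < ε} := by
    ext S
    simp [pBarBall]
  rw [h]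
  refine hF.1.isOpen_biInter fun A _ => hM.1.isOpen_biInter fun μ hμ => ?_
  have := hM.2 μ hμ
  exact isOpen_tau_single T A μ ε

/-- A `p̄`-open set containing the identity contains every automorphism that preserves each
member of a suitable finite Borel family. The basic sets need not be centred at the identity:
an automorphism preserving `A` has the same images of `A` as the identity, hence lies in any
basic set involving only such `A` that contains the identity. -/
lemma exists_family_of_pBar_open {O : Set (X ≃ᵐ X)} (hO : IsOpen[pBar] O)
    (h1 : MeasurableEquiv.refl X ∈ O) :
    ∃ F : Set (Set X), IsBorelFamily F ∧ ∀ S : X ≃ᵐ X, (∀ A ∈ F, S '' A = A) → S ∈ O := by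
  change TopologicalSpace.GenerateOpen _ O at hO
  induction hO with
  | basic O hO =>
    obtain ⟨T, F, M, ε, hF, -, -, rfl⟩ := hO
    refine ⟨F, hF, fun S hS A hA μ hμ => ?_⟩
    have h2 : S.symm '' A = A := by
      conv_lhs => rw [← hS A hA]
      simp [← image_comp]
    have h3 := h1 A hA μ hμ
    rw [hS A hA, h2]
    simpa using h3
  | univ => exact ⟨∅, ⟨finite_empty, by simp⟩, fun _ _ => mem_univ _⟩
  | inter s t _ _ ihs iht =>
    obtain ⟨F, hF, hFs⟩ := ihs h1.1
    obtain ⟨G, hG, hGt⟩ := iht h1.2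
    exact ⟨F ∪ G, ⟨hF.1.union hG.1, fun A hA => hA.elim (hF.2 A) (hG.2 A)⟩, fun S hS =>
      ⟨hFs S fun A hA => hS A (.inl hA), hGt S fun A hA => hS A (.inr hA)⟩⟩
  | sUnion K _ ih =>
    obtain ⟨s, hs, h1s⟩ := h1
    obtain ⟨F, hF, hFs⟩ := ih s hs h1s
    exact ⟨F, hF, fun S hS => ⟨s, hs, hFs S hS⟩⟩

/-- A Borel involution leaving a given Borel set `B` invariant, with at most countably many
fixed points in `B`. -/
lemma exists_involution_on [StandardBorelSpace X] {B : Set X} (hB : MeasurableSet B) :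
    ∃ g : X → X, Measurable g ∧ Function.Involutive g ∧ (∀ x ∈ B, g x ∈ B) ∧
      {x ∈ B | g x = x}.Countable := by
  classical
  by_cases hc : B.Countable
  · exact ⟨id, measurable_id, fun _ => rfl, fun _ h => h, hc.mono (sep_subset _ _)⟩
  have : StandardBorelSpace B := hB.standardBorel
  have : ¬ Countable B := fun h => hc (countable_coe_iff.mp h)
  -- Transport `x ↦ -x` on `ℝ`, whose only fixed point is `0`, to `B`.
  let e : B ≃ᵐ ℝ := PolishSpace.measurableEquivOfNotCountable this (not_countable)
  let g : X → X := fun x => if h : x ∈ B then (e.symm (-(e ⟨x, h⟩)) : X) else x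
  have hg : ∀ x (h : x ∈ B), g x = e.symm (-(e ⟨x, h⟩)) := fun x h => dif_pos h
  have hgB : ∀ x ∈ B, g x ∈ B := fun x h => by rw [hg x h]; exact Subtype.coe_prop _
  refine ⟨g, ?_, ?_, hgB, ?_⟩
  · refine Measurable.dite (s := B)
      (f := fun x : B => (e.symm (-(e x)) : X)) (g := fun x : (Bᶜ : Set X) => (x : X)) ?_ ?_ hB
    · exact measurable_subtype_coe.comp (e.symm.measurable.comp e.measurable.neg)
    · exact measurable_subtype_coe
  · intro x
    by_cases h : x ∈ B
    · rw [hg (g x) (hgB x h)]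
      simp [hg x h]
    · have h' : g x = x := dif_neg h
      rw [h', h']
  · refine (countable_singleton (e.symm 0 : X)).mono ?_
    rintro x ⟨h, hx⟩
    rw [hg x h] at hx
    have h2 : e.symm (-(e ⟨x, h⟩)) = ⟨x, h⟩ := Subtype.ext hx
    have h3 : -(e ⟨x, h⟩) = e ⟨x, h⟩ := by
      simpa using congrArg e h2
    have h4 : e ⟨x, h⟩ = 0 := by linarith
    simp [← h4]

lemma exists_invariant_moving_cocountable [StandardBorelSpace X] {F : Set (Set X)}
    (hF : IsBorelFamily F) :
    ∃ S : X ≃ᵐ X, (∀ A ∈ F, S '' A = A) ∧ {x | S x = x}.Countable := by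
  have := hF.1.to_subtype
  -- The fibres of `f` are the atoms of the partition generated by `F`.
  let f : X → (F → Prop) := fun x A => x ∈ A.1
  have hf : Measurable f := measurable_pi_iff.2 fun A => measurableSet_setOfPred.1 (hF.2 A.1 A.2)
  choose g hgm hgi hgB hgc using fun c : F → Prop =>
    exists_involution_on (hf (measurableSet_singleton c))
  let s : X → X := fun x => g (f x) x
  have hs : Measurable s :=
    (measurable_from_prod_countable_right (f := fun p : (F → Prop) × X => g p.1 p.2)
      hgm).comp (hf.prodMk measurable_id)
  have hfs : ∀ x, f (s x) = f x := fun x => hgB (f x) x rfl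
  have hsi : Function.Involutive s := fun x => by
    change g (f (s x)) (s x) = x
    rw [hfs]
    exact hgi (f x) x
  refine ⟨⟨hsi.toPerm, hs, hs⟩, fun A hA => ?_, ?_⟩
  · have hmem : ∀ x, s x ∈ A ↔ x ∈ A := fun x => iff_of_eq (congrFun (hfs x) ⟨A, hA⟩)
    ext x
    constructor
    · rintro ⟨y, hy, rfl⟩
      exact (hmem y).2 hy
    · exact fun hx => ⟨s x, (hmem x).2 hx, hsi x⟩
  · refine (countable_iUnion hgc).mono fun x hx => mem_iUnion.2 ?_
    exact ⟨f x, rfl, hx⟩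

lemma exists_nonatomic_prob (X : Type*) [MeasurableSpace X] [StandardBorelSpace X]
    [Uncountable X] : ∃ μ : Measure X, IsProbabilityMeasure μ ∧ NullSingletonClass μ := by
  let e : ℝ ≃ᵐ X := PolishSpace.measurableEquivOfNotCountable not_countable not_countable
  let ν : Measure ℝ := volume.restrict (Icc 0 1)
  have : IsProbabilityMeasure ν := ⟨by simp [ν]⟩
  refine ⟨ν.map e, Measure.isProbabilityMeasure_map e.measurable.aemeasurable, ⟨fun x => ?_⟩⟩
  rw [e.map_apply, ← e.image_symm, image_singleton, measure_singleton]

/-- The uniform topology `τ` is strictly stronger (finer) than `p̄`: every `p̄`-open set is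
`τ`-open, but there exists a `τ`-open set which is not `p̄`-open. -/
theorem tau_lt_pBar {X : Type*} [MeasurableSpace X] [StandardBorelSpace X] [Uncountable X] :
    (tau : TopologicalSpace (X ≃ᵐ X)) < pBar := by
  refine lt_of_le_not_ge tau_le_pBar fun hle => ?_
  obtain ⟨μ, hμ, hμa⟩ := exists_nonatomic_prob X
  have hopen : IsOpen[tau] (tauBall (MeasurableEquiv.refl X) {μ} 1) := by
    refine TopologicalSpace.isOpen_generateFrom_of_mem
      ⟨_, {μ}, 1, ⟨finite_singleton μ, ?_⟩, one_pos, rfl⟩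
    rintro ν rfl
    exact hμ
  have hmem : MeasurableEquiv.refl X ∈ tauBall (MeasurableEquiv.refl X) {μ} 1 := by
    intro ν _
    simp [Edis]
  obtain ⟨F, hF, hFS⟩ := exists_family_of_pBar_open (hle _ hopen) hmem
  obtain ⟨S, hSF, hSc⟩ := exists_invariant_moving_cocountable hF
  have hlt : μ (Edis S (MeasurableEquiv.refl X)) < 1 := hFS S hSF μ rfl
  have hone : μ {x | S x = x}ᶜ = 1 := by
    rw [prob_compl_eq_one_iff hSc.measurableSet]
    exact hSc.measure_zero μ
  exact hlt.not_ge (hone ▸ measure_mono fun x hx => .inl hx)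

end BDK
end

section
/- (1) The uniform topology τ on Aut(X,𝓑) is strictly stronger than the topology τ₀: every τ₀-open set is τ-open but not conversely. (2) The topologies p and p₀ on Aut(X,𝓑) are equivalent. -/
/-!
Both "finer than" claims are immediate, since the generating sets of `τ₀` and `p₀` are among
those of `τ` and `p`.

The inclusion of `τ₀` in `τ` is strict because non-atomic measures do not see finite sets: for
`x ≠ y` the transposition of `x` and `y` lies in the same `τ₀`-open sets as the identity
(`mem_iff_of_tau0_open`), whereas the `τ`-neighborhood of the identity given by the Dirac measure
at `x` excludes it.

For `p₀ = p`, a bijection `S` satisfies `S A = T A` iff `S Aᶜ = T Aᶜ`, and the complement of a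
countable set in an uncountable space is uncountable, so in a basic `p`-neighborhood every
countable set may be traded for its complement.
-/

open MeasureTheory Set Filter Topology
open scoped ENNReal

namespace BDK

variable {X : Type*} [MeasurableSpace X]

open Classical in
/-- The transposition of two points as a Borel automorphism. -/
noncomputable def swapEquiv {X : Type*} [MeasurableSpace X] [MeasurableSingletonClass X]
    (x y : X) : X ≃ᵐ X :=
  have h : Measurable (Equiv.swap x y) :=
    Measurable.ite (measurableSet_singleton x) measurable_const
      (Measurable.ite (measurableSet_singleton y) measurable_const measurable_id)
  { toEquiv := Equiv.swap x y
    measurable_toFun := h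
    measurable_invFun := h }

theorem swapEquiv_left {X : Type*} [MeasurableSpace X] [MeasurableSingletonClass X] (x y : X) :
    swapEquiv x y x = y := by
  classical exact Equiv.swap_apply_left x y

theorem swapEquiv_of_ne {X : Type*} [MeasurableSpace X] [MeasurableSingletonClass X]
    {x y z : X} (hx : z ≠ x) (hy : z ≠ y) : swapEquiv x y z = z := by
  classical exact Equiv.swap_apply_of_ne_of_ne hx hy

theorem swapEquiv_symm_of_ne {X : Type*} [MeasurableSpace X] [MeasurableSingletonClass X]
    {x y z : X} (hx : z ≠ x) (hy : z ≠ y) : (swapEquiv x y).symm z = z := by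
  classical exact Equiv.swap_apply_of_ne_of_ne hx hy

theorem measure_Edis_swapEquiv {X : Type*} [MeasurableSpace X] [MeasurableSingletonClass X]
    (x y : X) (T : X ≃ᵐ X) (μ : Measure X) (hμ : ∀ z : X, μ {z} = 0) :
    μ (Edis (swapEquiv x y) T) = μ (Edis (MeasurableEquiv.refl X) T) := by
  have h0 : μ ({x} ∪ {y}) = 0 := measure_union_null (hμ x) (hμ y)
  rw [← measure_sdiff_null h0, ← measure_sdiff_null (s := Edis (MeasurableEquiv.refl X) T) h0]
  congr 1
  ext z
  simp only [mem_diff, mem_union, mem_singleton_iff, not_or, Edis, mem_setOf_eq]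
  refine and_congr_left fun ⟨hx, hy⟩ => ?_
  rw [swapEquiv_of_ne hx hy, swapEquiv_symm_of_ne hx hy]
  rfl

/-- The identity and a transposition are topologically indistinguishable in `τ₀`. -/
theorem mem_iff_of_tau0_open {X : Type*} [MeasurableSpace X] [MeasurableSingletonClass X]
    (x y : X) {O : Set (X ≃ᵐ X)} (hO : IsOpen[tau0] O) :
    swapEquiv x y ∈ O ↔ MeasurableEquiv.refl X ∈ O := by
  change TopologicalSpace.GenerateOpen _ O at hO
  induction hO with
  | basic s hs =>
    obtain ⟨T, M, ε, hM, -, rfl⟩ := hs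
    refine forall₂_congr fun μ hμ => ?_
    rw [measure_Edis_swapEquiv x y T μ (hM.2 μ hμ).2]
  | univ => simp
  | inter s t _ _ hs ht => exact and_congr hs ht
  | sUnion S _ ih =>
    simp only [mem_sUnion]
    exact exists_congr fun s => and_congr_right fun hs => ih s hs

theorem not_tau0_le_tau {X : Type*} [MeasurableSpace X] [MeasurableSingletonClass X]
    [Nontrivial X] : ¬ (tau0 : TopologicalSpace (X ≃ᵐ X)) ≤ tau := by
  intro hle
  obtain ⟨x, y, hxy⟩ := exists_pair_ne X
  have hτ : IsOpen[tau] (tauBall (MeasurableEquiv.refl X) {Measure.dirac x} 1) :=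
    .basic _ ⟨_, _, _, ⟨finite_singleton _, by rintro μ rfl; infer_instance⟩, one_pos, rfl⟩
  have h := (mem_iff_of_tau0_open x y (hle _ hτ)).2 (by simp [tauBall, Edis])
  have hx : x ∈ Edis (swapEquiv x y) (MeasurableEquiv.refl X) :=
    Or.inl (by rw [mem_setOf_eq, swapEquiv_left]; exact hxy.symm)
  have h1 := h _ rfl
  rw [Measure.dirac_apply_of_mem hx] at h1
  exact lt_irrefl _ h1

theorem p0Top_le_pTop {X : Type*} [MeasurableSpace X] [Uncountable X] :
    (p0Top : TopologicalSpace (X ≃ᵐ X)) ≤ pTop := by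
  classical
  refine le_generateFrom ?_
  rintro _ ⟨T, F, ⟨hfin, hF⟩, rfl⟩
  let c : Set X → Set X := fun A => if A.Countable then Aᶜ else A
  refine .basic _ ⟨T, c '' F, ⟨hfin.image c, ?_⟩, ?_⟩
  · rintro _ ⟨A, hA, rfl⟩
    by_cases h : A.Countable
    · simp only [c, h, if_true]
      refine ⟨(hF A hA).compl, fun h' => not_countable_univ (α := X) ?_⟩
      rw [← union_compl_self A]
      exact h.union h'
    · simpa only [c, h, if_false, not_false_eq_true, and_true] using hF A hA
  · ext S
    simp only [pBall, mem_setOf_eq, forall_mem_image]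
    refine forall₂_congr fun A _ => ?_
    by_cases h : A.Countable
    · simp only [c, h, if_true, image_compl_eq S.bijective, image_compl_eq T.bijective,
        compl_inj_iff]
    · simp only [c, h, if_false]

/-- (1) `τ` is strictly stronger (finer) than `τ₀`.  (2) `p` and `p₀` are equivalent. -/
theorem tau_lt_tau0_and_p_eq_p0 {X : Type*} [MeasurableSpace X] [StandardBorelSpace X]
    [Uncountable X] :
    (tau : TopologicalSpace (X ≃ᵐ X)) < tau0 ∧
    (pTop : TopologicalSpace (X ≃ᵐ X)) = p0Top := by
  refine ⟨lt_of_le_not_ge (TopologicalSpace.generateFrom_anti ?_) not_tau0_le_tau,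
    le_antisymm (TopologicalSpace.generateFrom_anti ?_) p0Top_le_pTop⟩
  · rintro _ ⟨T, M, ε, hM, hε, rfl⟩
    exact ⟨T, M, ε, ⟨hM.1, fun μ hμ => (hM.2 μ hμ).1⟩, hε, rfl⟩
  · rintro _ ⟨T, F, hF, rfl⟩
    exact ⟨T, F, ⟨hF.1, fun A hA => (hF.2 A hA).1⟩, rfl⟩

end BDK
end

section
/- The topologies p and p̃ on Aut(X,𝓑) are equivalent. -/
/-!
Both topologies are generated by their families of balls, so it suffices to show that every ball of
either kind contains, around each of its points `S₀`, a ball of the other kind centred at `S₀`.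

* A `p`-ball through `S₀` determined by Borel sets `A ∈ F` contains the `p̃`-ball of radius `1`
  around `S₀` determined by the indicators of these sets: two values of an indicator that differ by
  less than `1` are equal, so `S₀⁻¹ x` and `S⁻¹ x` lie in the same members of `F`
  (`isOpen_pTilde_pBall`).
* For a bounded Borel `f`, cut the range of `f` into finitely many intervals of small length `η`. If
  `S` and `S₀` agree on the `f`-preimages of these intervals, then `f ∘ S⁻¹` and `f ∘ S₀⁻¹` differ by
  at most `η` everywhere, and the triangle inequality keeps `S` in any `p̃`-ball containing `S₀`
  (`isOpen_pTop_pTildeBall_singleton`). A general `p̃`-ball is a finite intersection of such balls.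
-/

open MeasureTheory Set Filter Topology
open scoped ENNReal

namespace BDK

variable {X : Type*} [MeasurableSpace X]

/-- Oscillations of a bounded function along two maps are uniformly bounded, so the supremum in
`pTildeBall` is a genuine one. -/
lemma bddAbove_abs_sub {f : X → ℝ} {C : ℝ} (hC : ∀ x, |f x| ≤ C) (T S : X ≃ᵐ X) :
    BddAbove (range fun x => |f (T.symm x) - f (S.symm x)|) := by
  refine ⟨C + C, ?_⟩
  rintro _ ⟨x, rfl⟩
  exact (abs_sub _ _).trans (add_le_add (hC _) (hC _))

lemma mem_image_iff_symm_mem (T : X ≃ᵐ X) (A : Set X) (x : X) :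
    x ∈ T '' A ↔ T.symm x ∈ A := by
  constructor
  · rintro ⟨y, hy, rfl⟩
    simpa using hy
  · intro h
    exact ⟨T.symm x, h, by simp⟩

lemma isOpen_pTilde_pBall (T : X ≃ᵐ X) {F : Set (Set X)} (hF : IsBorelFamily F) :
    IsOpen[pTilde] (pBall T F) := by
  let _ : TopologicalSpace (X ≃ᵐ X) := pTilde
  rw [isOpen_iff_forall_mem_open]
  intro S₀ hS₀
  have hbdd : ∀ A : Set X, ∀ x, |A.indicator (fun _ => (1 : ℝ)) x| ≤ 1 := by
    intro A x
    by_cases h : x ∈ A <;> simp [h]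
  refine ⟨pTildeBall S₀ ((fun A => A.indicator fun _ => (1 : ℝ)) '' F) 1, ?_,
    TopologicalSpace.isOpen_generateFrom_of_mem ⟨S₀, _, 1, ⟨hF.1.image _, ?_⟩, one_pos, rfl⟩, ?_⟩
  · intro S hS A hA
    rw [← hS₀ A hA]
    have h1 := hS _ (mem_image_of_mem _ hA)
    ext x
    have h2 := (le_ciSup (bddAbove_abs_sub (hbdd A) S₀ S) x).trans_lt h1
    rw [mem_image_iff_symm_mem, mem_image_iff_symm_mem]
    by_cases ha : S₀.symm x ∈ A <;> by_cases hb : S.symm x ∈ A <;> simp [ha, hb] at h2 ⊢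
  · rintro _ ⟨A, hA, rfl⟩
    exact ⟨measurable_const.indicator (hF.2 A hA), 1, hbdd A⟩
  · intro f _
    simp

lemma isOpen_pTop_pTildeBall_singleton (T : X ≃ᵐ X) {f : X → ℝ} (hf : Measurable f) {C : ℝ}
    (hC : ∀ x, |f x| ≤ C) (ε : ℝ) : IsOpen[pTop] (pTildeBall T {f} ε) := by
  let _ : TopologicalSpace (X ≃ᵐ X) := pTop
  rw [isOpen_iff_forall_mem_open]
  intro S₀ hS₀
  have hδ := hS₀ f rfl
  -- This also covers an empty `X`, where the real supremum is `0` by convention.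
  have hδ0 : 0 ≤ ⨆ x, |f (T.symm x) - f (S₀.symm x)| := Real.iSup_nonneg fun _ => abs_nonneg _
  set δ := ⨆ x, |f (T.symm x) - f (S₀.symm x)| with hδdef
  obtain ⟨η, hη, hηε⟩ : ∃ η, 0 < η ∧ δ + η < ε := ⟨(ε - δ) / 2, by linarith, by linarith⟩
  let L : ℤ → Set X := fun k => {x | ⌊f x / η⌋ = k}
  let K : Set ℤ := Icc ⌊-C / η⌋ ⌊C / η⌋
  have hK : ∀ x, ⌊f x / η⌋ ∈ K := fun x =>
    ⟨Int.floor_mono (by gcongr; exact (abs_le.1 (hC x)).1),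
      Int.floor_mono (by gcongr; exact (abs_le.1 (hC x)).2)⟩
  refine ⟨pBall S₀ (L '' K), ?_,
    TopologicalSpace.isOpen_generateFrom_of_mem
      ⟨S₀, _, ⟨(finite_Icc _ _).image _, ?_⟩, rfl⟩, fun _ _ => rfl⟩
  · intro S hS g hg
    rw [mem_singleton_iff.1 hg]
    refine lt_of_le_of_lt (Real.iSup_le (fun x => ?_) (by linarith)) hηε
    have h1 : |f (T.symm x) - f (S₀.symm x)| ≤ δ := le_ciSup (bddAbove_abs_sub hC T S₀) x
    have h2 : S.symm x ∈ L ⌊f (S₀.symm x) / η⌋ := by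
      rw [← mem_image_iff_symm_mem, hS _ (mem_image_of_mem _ (hK _)), mem_image_iff_symm_mem]
      rfl
    have h3 : |f (S₀.symm x) - f (S.symm x)| ≤ η := by
      have h4 := Int.abs_sub_lt_one_of_floor_eq_floor (Eq.symm h2)
      rw [← sub_div, abs_div, abs_of_pos hη, div_lt_one hη] at h4
      exact h4.le
    exact (abs_sub_le _ (f (S₀.symm x)) _).trans (add_le_add h1 h3)
  · rintro _ ⟨k, -, rfl⟩
    exact (hf.div_const η).floor (measurableSet_singleton k)

/-- The topologies `p` and `p̃` are equivalent. -/
theorem p_eq_pTilde {X : Type*} [MeasurableSpace X] [StandardBorelSpace X] [Uncountable X] :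
    (pTop : TopologicalSpace (X ≃ᵐ X)) = pTilde := by
  apply le_antisymm
  · apply le_generateFrom
    rintro _ ⟨T, G, ε, hG, -, rfl⟩
    have hinter : pTildeBall T G ε = ⋂ f ∈ G, pTildeBall T {f} ε := by
      ext S
      simp [pTildeBall]
    rw [hinter]
    let _ : TopologicalSpace (X ≃ᵐ X) := pTop
    refine hG.1.isOpen_biInter fun f hf => ?_
    obtain ⟨hm, C, hC⟩ := hG.2 f hf
    exact isOpen_pTop_pTildeBall_singleton T hm hC ε
  · apply le_generateFrom
    rintro _ ⟨T, F, hF, rfl⟩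
    exact isOpen_pTilde_pBall T hF

end BDK
end

section
/- The set Ctbl(X) of Borel automorphisms with at most countable support is a normal subgroup of Aut(X,𝓑), and it is closed with respect to each of the topologies τ, τ'', τ₀, p and p̄. -/
/-! The algebraic part is a computation of supports: the support of a composition lies in the union
of the supports, `T` and `T⁻¹` have the same support, and the support of `S T S⁻¹` is the image under
`S` of that of `T`.

For closedness, let `T` have uncountable support. Embedding `X` into `ℝ` by `φ`, the support is the
countable union over rational `q` of `{φ x < q < φ (T x)}` and `{φ (T x) < q < φ x}`, so one of these
Borel sets, `F`, is uncountable, and `T F ∩ F = ∅`. Being an uncountable standard Borel space, `F`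
carries a non-atomic probability measure `μ` (`exists_displaced`). Every `S` of countable support
fixes `μ`-almost every point, whereas `T` moves all of `F` off itself, and this is visible in each
topology: `E(S,T)` contains almost all of `F`; `S F` meets `F` but `T F` does not;
`S F Δ T F` contains almost all of `F`; and `S∗μ = μ` gives mass `1` to `F`, while `T∗μ` gives it
mass `0`. So the basic neighborhood of `T` determined by `F` or `μ`, of radius `1` where
there is one, misses `Ctbl`. -/

open MeasureTheory Set Filter Topology
open scoped ENNReal

namespace BDK

variable {X : Type*} [MeasurableSpace X]

/-! ### Closedness from a subbase -/

lemma isClosed_generateFrom {α : Type*} {G : Set (Set α)} {C : Set α}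
    (h : ∀ T ∉ C, ∃ O ∈ G, T ∈ O ∧ ∀ S ∈ C, S ∉ O) :
    @IsClosed α (.generateFrom G) C := by
  let _ : TopologicalSpace α := .generateFrom G
  rw [← isOpen_compl_iff, isOpen_iff_forall_mem_open]
  intro T hT
  obtain ⟨O, hO, hTO, hS⟩ := h T hT
  exact ⟨O, fun S hSO hSC => hS S hSC hSO, TopologicalSpace.isOpen_generateFrom_of_mem hO, hTO⟩

/-! ### Displaced sets and non-atomic measures -/

/-- The measure is the pushforward of Lebesgue measure under a Borel isomorphism `[0,1] ≃ F`. -/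
lemma exists_nonatomic [StandardBorelSpace X] {F : Set X} (hF : MeasurableSet F)
    (hc : ¬ F.Countable) :
    ∃ μ : Measure X, IsProbabilityMeasure μ ∧ (∀ x, μ {x} = 0) ∧ ∀ᵐ x ∂μ, x ∈ F := by
  have := hF.standardBorel
  have hI : ¬ Countable unitInterval := by
    intro h
    have h0 : (Icc (0 : ℝ) 1).Countable := Set.countable_coe_iff.mp h
    have h1 := h0.measure_zero volume
    simp at h1
  let e : unitInterval ≃ᵐ F :=
    PolishSpace.measurableEquivOfNotCountable hI (fun h => hc (Set.countable_coe_iff.mp h))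
  have hm : Measurable (fun t => (e t : X)) := measurable_subtype_coe.comp e.measurable
  refine ⟨Measure.map (fun t => (e t : X)) volume,
    Measure.isProbabilityMeasure_map hm.aemeasurable, fun x => ?_, ?_⟩
  · rw [Measure.map_apply hm (measurableSet_singleton x)]
    refine Set.Subsingleton.measure_zero ?_ _
    intro a ha b hb
    exact e.injective (Subtype.ext (Eq.trans ha (Eq.symm hb)))
  · refine (ae_map_iff hm.aemeasurable hF).mpr ?_
    exact Eventually.of_forall fun t => (e t).2

/-- An automorphism of uncountable support displaces a Borel set carrying a non-atomic
probability measure. -/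
lemma exists_displaced [StandardBorelSpace X] {T : X ≃ᵐ X} (hT : T ∉ (Ctbl : Set (X ≃ᵐ X))) :
    ∃ (F : Set X) (μ : Measure X), MeasurableSet F ∧ (∀ x ∈ F, T x ∉ F) ∧
      IsProbabilityMeasure μ ∧ (∀ x, μ {x} = 0) ∧ ∀ᵐ x ∂μ, x ∈ F := by
  have hφ := measurableEmbedding_embeddingReal X
  set φ := embeddingReal X
  have hφT : Measurable fun x => φ (T x) := hφ.measurable.comp T.measurable
  obtain ⟨F, hFm, hFd, hFc⟩ :
      ∃ F : Set X, MeasurableSet F ∧ (∀ x ∈ F, T x ∉ F) ∧ ¬ F.Countable := by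
    by_contra! hcon
    refine hT ?_
    have hq : ∀ q : ℚ, ({x | φ x < q ∧ q < φ (T x)} ∪ {x | φ (T x) < q ∧ q < φ x}).Countable := by
      intro q
      refine (hcon _ ?_ ?_).union (hcon _ ?_ ?_)
      · exact (measurableSet_lt hφ.measurable measurable_const).inter
          (measurableSet_lt measurable_const hφT)
      · rintro x ⟨-, h⟩ ⟨h', -⟩
        exact lt_asymm h h'
      · exact (measurableSet_lt hφT measurable_const).inter
          (measurableSet_lt measurable_const hφ.measurable)
      · rintro x ⟨h, -⟩ ⟨-, h'⟩
        exact lt_asymm h h'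
    refine (Set.countable_iUnion hq).mono fun x hx => ?_
    rw [mem_iUnion]
    rcases lt_or_gt_of_ne (hφ.injective.ne hx) with h | h
    · obtain ⟨q, h1, h2⟩ := exists_rat_btwn h
      exact ⟨q, Or.inr ⟨h1, h2⟩⟩
    · obtain ⟨q, h1, h2⟩ := exists_rat_btwn h
      exact ⟨q, Or.inl ⟨h1, h2⟩⟩
  obtain ⟨μ, h1, h2, h3⟩ := exists_nonatomic hFm hFc
  exact ⟨F, μ, hFm, hFd, h1, h2, h3⟩

lemma ae_fixed {μ : Measure X} (hμ : ∀ x, μ {x} = 0) {S : X ≃ᵐ X}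
    (hS : S ∈ (Ctbl : Set (X ≃ᵐ X))) : ∀ᵐ x ∂μ, S x = x := by
  have : NullSingletonClass μ := ⟨hμ⟩
  exact Set.Countable.measure_zero hS μ

lemma measure_eq_one_of_ae {μ : Measure X} [IsProbabilityMeasure μ] {A : Set X}
    (h : ∀ᵐ x ∂μ, x ∈ A) : μ A = 1 := by
  exact (measure_congr (eventuallyEq_univ.mpr h)).trans measure_univ

/-! ### Neighborhoods that miss `Ctbl` -/

lemma notMem_tauBall {μ : Measure X} [IsProbabilityMeasure μ] (hμ : ∀ x, μ {x} = 0) {F : Set X}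
    {T S : X ≃ᵐ X} (hT : ∀ x ∈ F, T x ∉ F) (hF : ∀ᵐ x ∂μ, x ∈ F)
    (hS : S ∈ (Ctbl : Set (X ≃ᵐ X))) : S ∉ tauBall T {μ} 1 := by
  intro h
  refine (h μ rfl).ne (measure_eq_one_of_ae ?_)
  filter_upwards [hF, ae_fixed hμ hS] with x hx hSx
  refine Or.inl fun he => hT x hx ?_
  rwa [← he, hSx]

lemma mem_tauBall_self (T : X ≃ᵐ X) (M : Set (Measure X)) : T ∈ tauBall T M 1 := by
  intro μ _
  simp [Edis]

/-- The real supremum in `tau''Ball` is over a bounded family, hence not a junk value. -/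
lemma bddAbove_tau'' {μ ν : Measure X} [IsProbabilityMeasure μ] [IsProbabilityMeasure ν] :
    BddAbove (range fun f : X → ℝ => ⨆ _ : f ∈ (BorelUnitBall : Set (X → ℝ)),
      |(∫ x, f x ∂μ) - ∫ x, f x ∂ν|) := by
  refine ⟨2, ?_⟩
  rintro _ ⟨f, rfl⟩
  refine Real.iSup_le (fun hf => ?_) (by norm_num)
  have key : ∀ ρ : Measure X, IsProbabilityMeasure ρ → |∫ x, f x ∂ρ| ≤ 1 := by
    intro ρ _
    have := norm_integral_le_of_norm_le_const (μ := ρ) (f := f) (C := 1)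
      (Eventually.of_forall hf.2)
    simpa using this
  have h1 := abs_le.mp (key μ inferInstance)
  have h2 := abs_le.mp (key ν inferInstance)
  exact abs_le.mpr ⟨by linarith [h1.1, h2.2], by linarith [h1.2, h2.1]⟩

/-- The indicator of `F` is a test function on which `S∗μ` and `T∗μ` differ by `1`. -/
lemma notMem_tau''Ball {μ : Measure X} [IsProbabilityMeasure μ] (hμ : ∀ x, μ {x} = 0) {F : Set X}
    (hFm : MeasurableSet F) {T S : X ≃ᵐ X} (hT : ∀ x ∈ F, T x ∉ F) (hF : ∀ᵐ x ∂μ, x ∈ F)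
    (hS : S ∈ (Ctbl : Set (X ≃ᵐ X))) : S ∉ tau''Ball T {μ} 1 := by
  intro h
  have := Measure.isProbabilityMeasure_map (μ := μ) S.measurable.aemeasurable
  have := Measure.isProbabilityMeasure_map (μ := μ) T.measurable.aemeasurable
  have hf : F.indicator (fun _ => (1 : ℝ)) ∈ (BorelUnitBall : Set (X → ℝ)) := by
    refine ⟨measurable_const.indicator hFm, fun x => ?_⟩
    by_cases hx : x ∈ F <;> simp [hx]
  have h1 := le_ciSup (bddAbove_tau'' (μ := Measure.map S μ) (ν := Measure.map T μ))
    (F.indicator fun _ => (1 : ℝ))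
  have hSF : Measure.map S μ F = 1 := by
    rw [Measure.map_apply S.measurable hFm]
    refine measure_eq_one_of_ae ?_
    filter_upwards [hF, ae_fixed hμ hS] with x hx hSx
    rwa [mem_preimage, hSx]
  have hTF : Measure.map T μ F = 0 := by
    rw [Measure.map_apply T.measurable hFm, measure_eq_zero_iff_ae_notMem]
    filter_upwards [hF] with x hx
    exact hT x hx
  have h2 := h1.trans_lt (h μ rfl)
  simp only [ciSup_pos hf, integral_indicator_const (1 : ℝ) hFm, measureReal_def, hSF, hTF] at h2
  simp at h2

lemma mem_tau''Ball_self (T : X ≃ᵐ X) (M : Set (Measure X)) : T ∈ tau''Ball T M 1 := by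
  intro μ _
  simp

/-- `Ctbl(X)` is a normal subgroup of `Aut(X,𝓑)` (it contains the identity and is closed
under composition, inverse and conjugation) and it is closed with respect to each of the
topologies `τ`, `τ''`, `τ₀`, `p` and `p̄`. -/
theorem ctbl_normal_closed {X : Type*} [MeasurableSpace X] [StandardBorelSpace X]
    [Uncountable X] :
    (MeasurableEquiv.refl X ∈ (Ctbl : Set (X ≃ᵐ X))) ∧
    (∀ S T : X ≃ᵐ X, S ∈ Ctbl → T ∈ Ctbl → S.trans T ∈ Ctbl) ∧
    (∀ T : X ≃ᵐ X, T ∈ Ctbl → T.symm ∈ Ctbl) ∧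
    (∀ T S : X ≃ᵐ X, T ∈ Ctbl → S.symm.trans (T.trans S) ∈ Ctbl) ∧
    @IsClosed (X ≃ᵐ X) tau Ctbl ∧ @IsClosed (X ≃ᵐ X) tau'' Ctbl ∧
    @IsClosed (X ≃ᵐ X) tau0 Ctbl ∧ @IsClosed (X ≃ᵐ X) pTop Ctbl ∧
    @IsClosed (X ≃ᵐ X) pBar Ctbl := by
  refine ⟨?_, ?_, ?_, ?_, ?_, ?_, ?_, ?_, ?_⟩
  · simp [Ctbl]
  · intro S T hS hT
    refine (Set.Countable.union hS hT).mono fun x hx => ?_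
    by_contra hcon
    simp only [mem_union, mem_ofPred_eq, not_or, not_not] at hcon
    refine hx ?_
    simp [hcon.1, hcon.2]
  · intro T hT
    refine Set.Countable.mono (s₂ := {x | T x ≠ x}) (fun x hx he => hx ?_) hT
    exact (MeasurableEquiv.symm_apply_eq T).mpr he.symm
  · intro T S hT
    refine (Set.Countable.image hT S).mono fun x hx => ?_
    refine ⟨S.symm x, fun he => hx ?_, S.apply_symm_apply x⟩
    simp [he]
  · refine isClosed_generateFrom fun T hT => ?_
    obtain ⟨F, μ, hFm, hFT, hμ, hat, hF⟩ := exists_displaced hT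
    exact ⟨_, ⟨T, {μ}, 1, ⟨finite_singleton μ, by rintro _ rfl; exact hμ⟩, one_pos, rfl⟩,
      mem_tauBall_self T _, fun S hS => notMem_tauBall hat hFT hF hS⟩
  · refine isClosed_generateFrom fun T hT => ?_
    obtain ⟨F, μ, hFm, hFT, hμ, hat, hF⟩ := exists_displaced hT
    exact ⟨_, ⟨T, {μ}, 1, ⟨finite_singleton μ, by rintro _ rfl; exact hμ⟩, one_pos, rfl⟩,
      mem_tau''Ball_self T _, fun S hS => notMem_tau''Ball hat hFm hFT hF hS⟩
  · refine isClosed_generateFrom fun T hT => ?_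
    obtain ⟨F, μ, hFm, hFT, hμ, hat, hF⟩ := exists_displaced hT
    exact ⟨_, ⟨T, {μ}, 1, ⟨finite_singleton μ, by rintro _ rfl; exact ⟨hμ, hat⟩⟩, one_pos, rfl⟩,
      mem_tauBall_self T _, fun S hS => notMem_tauBall hat hFT hF hS⟩
  · refine isClosed_generateFrom fun T hT => ?_
    obtain ⟨F, μ, hFm, hFT, hμ, hat, hF⟩ := exists_displaced hT
    refine ⟨_, ⟨T, {F}, ⟨finite_singleton F, by rintro _ rfl; exact hFm⟩, rfl⟩,
      fun A _ => rfl, fun S hS h => ?_⟩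
    obtain ⟨x, hx, hSx⟩ := (hF.and (ae_fixed hat hS)).exists
    have hx' : x ∈ T '' F := h F rfl ▸ ⟨x, hx, hSx⟩
    obtain ⟨y, hy, rfl⟩ := hx'
    exact hFT y hy hx
  · refine isClosed_generateFrom fun T hT => ?_
    obtain ⟨F, μ, hFm, hFT, hμ, hat, hF⟩ := exists_displaced hT
    refine ⟨_, ⟨T, {F}, {μ}, 1, ⟨finite_singleton F, by rintro _ rfl; exact hFm⟩,
      ⟨finite_singleton μ, by rintro _ rfl; exact hμ⟩, one_pos, rfl⟩,
      fun A _ ν _ => by simp, fun S hS h => ?_⟩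
    refine (le_self_add.trans_lt (h F rfl μ rfl)).ne (measure_eq_one_of_ae ?_)
    filter_upwards [hF, ae_fixed hat hS] with x hx hSx
    refine Or.inl ⟨⟨x, hx, hSx⟩, ?_⟩
    rintro ⟨y, hy, rfl⟩
    exact hFT y hy hx

end BDK
end

section
/- For every T ∈ Aut(X,𝓑) and all Borel sets F₁,…,Fₙ ⊆ X, the set W(T;F₁,…,Fₙ) = {S ∈ Aut(X,𝓑) : S Fᵢ = T Fᵢ for i = 1,…,n} is closed in Aut(X,𝓑) with respect to each of the topologies τ, τ'', p and p̄. -/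
/-!
If `S` lies outside `pBall T F`, some `A ∈ F` and some point `x` satisfy
`x ∈ S '' A ↔ x ∉ T '' A`.  So it suffices to find, in each topology, a neighbourhood of `S` whose
members `R` all satisfy `x ∈ R '' A ↔ x ∈ S '' A` (`isClosed_pBall_of`).
A basic ball of radius `1` around `S` works: one measures with the Dirac mass at `x` for `τ` and
`p̄`, and with the Dirac mass at `S⁻¹ x` for `τ''`, where the test function `𝟙_{x}` shows that
`R (S⁻¹ x) = x`.  For `p` the ball given by `A` alone suffices.
-/

open MeasureTheory Set Filter Topology
open scoped ENNReal

namespace BDK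

variable {X : Type*} [MeasurableSpace X]

/-- Neighbourhoods of `S` on which `x ∈ R '' A` has the same truth value as `x ∈ S '' A` make
`pBall T F` closed. -/
lemma isClosed_pBall_of (t : TopologicalSpace (X ≃ᵐ X)) (T : X ≃ᵐ X) (F : Set (Set X))
    (h : ∀ (S : X ≃ᵐ X), ∀ A ∈ F, ∀ x : X, ∃ O : Set (X ≃ᵐ X), IsOpen[t] O ∧ S ∈ O ∧
      ∀ R ∈ O, (x ∈ R '' A ↔ x ∈ S '' A)) :
    @IsClosed (X ≃ᵐ X) t (pBall T F) := by
  rw [← isOpen_compl_iff, isOpen_iff_forall_mem_open]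
  intro S hS
  simp only [pBall, mem_compl_iff, mem_ofPred_eq, not_forall] at hS
  obtain ⟨A, hA, hne⟩ := hS
  obtain ⟨x, hx⟩ : ∃ x, ¬ (x ∈ S '' A ↔ x ∈ T '' A) := by
    by_contra! hc
    exact hne (Set.ext hc)
  obtain ⟨O, hO, hSO, hR⟩ := h S A hA x
  refine ⟨O, fun R hRO hRT => hx ?_, hO, hSO⟩
  rw [← hR R hRO, hRT A hA]

lemma isProbFamily_dirac (x : X) : IsProbFamily {Measure.dirac x} := by
  refine ⟨finite_singleton _, ?_⟩
  rintro μ rfl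
  infer_instance

lemma notMem_of_dirac_lt_one [MeasurableSingletonClass X] {x : X} {B : Set X}
    (h : Measure.dirac x B < 1) : x ∉ B := by
  intro hx
  simp [hx] at h

lemma mem_image_iff_of_symm_eq {R S : X ≃ᵐ X} {x : X} (h : R.symm x = S.symm x) (A : Set X) :
    x ∈ R '' A ↔ x ∈ S '' A := by
  rw [MeasurableEquiv.image_eq_preimage_symm, MeasurableEquiv.image_eq_preimage_symm,
    mem_preimage, mem_preimage, h]

/-- The supremum defining `tau''Ball` for a Dirac mass at `y` and radius `1` forces equality
of the images of `y`. -/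
lemma apply_eq_of_mem_tau''Ball [MeasurableSingletonClass X] {R S : X ≃ᵐ X} {y : X}
    (h : R ∈ tau''Ball S {Measure.dirac y} 1) : R y = S y := by
  have h1 := h _ rfl
  simp only [Measure.map_dirac, integral_dirac] at h1
  by_contra hne
  -- The real supremum is a junk value unless its range is bounded, here by `2`.
  have hbdd : BddAbove (range fun f : X → ℝ =>
      ⨆ _ : f ∈ (BorelUnitBall : Set (X → ℝ)), |f (R y) - f (S y)|) := by
    refine ⟨2, ?_⟩
    rintro _ ⟨f, rfl⟩
    refine Real.iSup_le (fun hf => ?_) (by norm_num)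
    have h2 := abs_le.1 (hf.2 (R y))
    have h3 := abs_le.1 (hf.2 (S y))
    rw [abs_le]
    constructor <;> linarith
  have hf : indicator {S y} (fun _ => (1 : ℝ)) ∈ (BorelUnitBall : Set (X → ℝ)) := by
    refine ⟨measurable_const.indicator (measurableSet_singleton _), fun x => ?_⟩
    by_cases hx : x = S y <;> simp [indicator, hx]
  have h2 := le_ciSup hbdd (indicator {S y} fun _ => (1 : ℝ))
  simp only [ciSup_pos hf] at h2
  have h3 : |indicator {S y} (fun _ => (1 : ℝ)) (R y) - indicator {S y} (fun _ => (1 : ℝ)) (S y)|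
      = 1 := by
    simp [indicator, hne]
  rw [h3] at h2
  linarith

/-- For any `T` and any finite family of Borel sets, the set `W(T;F₁,…,Fₙ)` is closed with
respect to each of the topologies `τ`, `τ''`, `p` and `p̄`. -/
theorem pBall_closed {X : Type*} [MeasurableSpace X] [StandardBorelSpace X] [Uncountable X]
    (T : X ≃ᵐ X) (F : Set (Set X)) (hfin : F.Finite) (hmeas : ∀ A ∈ F, MeasurableSet A) :
    @IsClosed (X ≃ᵐ X) tau (pBall T F) ∧ @IsClosed (X ≃ᵐ X) tau'' (pBall T F) ∧
    @IsClosed (X ≃ᵐ X) pTop (pBall T F) ∧ @IsClosed (X ≃ᵐ X) pBar (pBall T F) := by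
  refine ⟨?_, ?_, ?_, ?_⟩
  · refine isClosed_pBall_of _ T F fun S A _ x =>
      ⟨tauBall S {Measure.dirac x} 1, .basic _ ⟨S, _, 1, isProbFamily_dirac x, one_pos, rfl⟩,
        ?_, fun R hR => ?_⟩
    · simp [tauBall, Edis]
    · have hx := notMem_of_dirac_lt_one (hR _ rfl)
      refine mem_image_iff_of_symm_eq ?_ A
      by_contra hne
      exact hx (Or.inr hne)
  · refine isClosed_pBall_of _ T F fun S A _ x =>
      ⟨tau''Ball S {Measure.dirac (S.symm x)} 1,
        .basic _ ⟨S, _, 1, isProbFamily_dirac _, one_pos, rfl⟩, ?_, fun R hR => ?_⟩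
    · simp [tau''Ball]
    · have hx := apply_eq_of_mem_tau''Ball hR
      rw [MeasurableEquiv.apply_symm_apply] at hx
      refine mem_image_iff_of_symm_eq ?_ A
      rw [← hx, MeasurableEquiv.symm_apply_apply, hx]
  · refine isClosed_pBall_of _ T F fun S A hA x =>
      ⟨pBall S {A}, .basic _ ⟨S, {A}, ⟨finite_singleton _, ?_⟩, rfl⟩,
        fun _ _ => rfl, fun R hR => ?_⟩
    · rintro B rfl
      exact hmeas B hA
    · rw [hR A rfl]
  · refine isClosed_pBall_of _ T F fun S A hA x =>
      ⟨pBarBall S {A} {Measure.dirac x} 1,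
        .basic _ ⟨S, {A}, _, 1, ⟨finite_singleton _, ?_⟩, isProbFamily_dirac x, one_pos, rfl⟩,
        ?_, fun R hR => ?_⟩
    · rintro B rfl
      exact hmeas B hA
    · simp [pBarBall]
    · have hx := notMem_of_dirac_lt_one (lt_of_le_of_lt le_self_add (hR A rfl _ rfl))
      rw [mem_symmDiff] at hx
      tauto

end BDK
end
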